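/- arXiv:2311.03981 — 5 statements merged into one kernel-verified Lean document; each statement's English description precedes it below -/
import Mathlib

section
/- Let V be an n-dimensional vector space over F_q or ℂ and w ∈ GL(V) ∗ F_r a reduced word of length l ≥ 2. Then the diameter of the word image w(SL(V)^r) in the projective rank seminorm satisfies diam(w(SL(V)^r)) ≥ ‖w‖_crit / l − 1. -/
/-- The projective rank seminorm on `GL(V)`. -/
noncomputable def projNorm {K V : Type*} [Field K] [AddCommGroup V] [Module K V]
    (g : (Module.End K V)ˣ) : ℕ :=
  sInf {m | ∃ μ : Kˣ,
    Module.finrank K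
      (LinearMap.range ((g : Module.End K V) - (μ : K) • (1 : Module.End K V))) = m}

/-- The diameter of `GL(V)` in the projective rank seminorm. -/
noncomputable def projDiamGL (K V : Type*) [Field K] [AddCommGroup V] [Module K V] : ℕ :=
  sSup {m | ∃ g : (Module.End K V)ˣ, projNorm g = m}

/-- Evaluation of the word `w = c₀ x_{ι(1)}^{ε(1)} c₁ ⋯ x_{ι(l)}^{ε(l)} c_l` at a tuple `h`. -/
def wordEval {G : Type*} [Group G] {l r : ℕ} (c : Fin (l + 1) → G) (ι : Fin l → Fin r)
    (ε : Fin l → ℤ) (h : Fin r → G) : G :=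
  c 0 * (List.ofFn (fun j : Fin l => (h (ι j)) ^ (ε j) * c j.succ)).prod

/-- The critical length `‖w‖_crit = min {diam GL(V), ‖c_j‖ : j critical}`. -/
noncomputable def critLength {K V : Type*} [Field K] [AddCommGroup V] [Module K V]
    {l r : ℕ} (c : Fin (l + 1) → (Module.End K V)ˣ) (ι : Fin l → Fin r) (ε : Fin l → ℤ) : ℕ :=
  sInf (insert (projDiamGL K V)
    {m | ∃ j : ℕ, ∃ hj : j + 1 < l,
      ι ⟨j, by omega⟩ = ι ⟨j + 1, hj⟩ ∧ ε ⟨j, by omega⟩ = -ε ⟨j + 1, hj⟩ ∧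
      projNorm (c ⟨j + 1, by omega⟩) = m})

namespace WordDiam

section LA
variable {K V : Type*} [Field K] [AddCommGroup V] [Module K V]

theorem mem_sup_span {R : Submodule K V} {x y : V} :
    x ∈ R ⊔ Submodule.span K {y} ↔ ∃ a : K, x - a • y ∈ R := by
  rw [Submodule.mem_sup]
  constructor
  · rintro ⟨t, ht, z, hz, rfl⟩
    obtain ⟨a, rfl⟩ := Submodule.mem_span_singleton.1 hz
    exact ⟨a, by simpa using ht⟩
  · rintro ⟨a, ha⟩
    exact ⟨_, ha, a • y, Submodule.mem_span_singleton.2 ⟨a, rfl⟩, by simp⟩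

theorem avoid_two {P Q : Submodule K V} (hP : P ≠ ⊤) (hQ : Q ≠ ⊤) : ∃ y, y ∉ P ∧ y ∉ Q := by
  obtain ⟨a, ha⟩ : ∃ a, a ∉ P := by
    by_contra! h
    exact hP (Submodule.eq_top_iff'.2 h)
  obtain ⟨b, hb⟩ : ∃ b, b ∉ Q := by
    by_contra! h
    exact hQ (Submodule.eq_top_iff'.2 h)
  by_cases ha' : a ∈ Q
  · by_cases hb' : b ∈ P
    · refine ⟨a + b, fun h => ha ?_, fun h => hb ?_⟩
      · exact (Submodule.add_mem_iff_left P hb').1 h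
      · exact (Submodule.add_mem_iff_right Q ha').1 h
    · exact ⟨b, hb', hb⟩
  · exact ⟨a, ha, ha'⟩

set_option linter.unusedSectionVars false

variable [FiniteDimensional K V]

theorem finrank_sup_span_le (R : Submodule K V) (y : V) :
    Module.finrank K ↥(R ⊔ Submodule.span K {y}) ≤ Module.finrank K R + 1 := by
  have h1 := Submodule.finrank_add_le_finrank_add_finrank R (Submodule.span K {y})
  have h2 := finrank_span_le_card (R := K) ({y} : Set V)
  simp at h2
  omega

theorem ne_top_of_lt {R : Submodule K V} (h : Module.finrank K R < Module.finrank K V) :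
    R ≠ ⊤ := (Submodule.lt_top_of_finrank_lt_finrank h).ne

theorem exists_notMem_of_lt {R : Submodule K V} (h : Module.finrank K R < Module.finrank K V) :
    ∃ y, y ∉ R := by
  obtain ⟨y, hy, -⟩ := avoid_two (ne_top_of_lt h) (ne_top_of_lt h)
  exact ⟨y, hy⟩

theorem trans_one {T : Submodule K V} {x y : V} (h : x ∉ T ⊔ Submodule.span K {y - x}) :
    ∃ s : (Module.End K V)ˣ, LinearMap.det (s : Module.End K V) = 1 ∧
      (∀ t ∈ T, (s : Module.End K V) t = t) ∧ (s : Module.End K V) x = y := by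
  obtain ⟨f, hfx, hf⟩ := Submodule.exists_le_ker_of_notMem h
  have hfu : f (y - x) = 0 :=
    hf (Submodule.mem_sup_right (Submodule.mem_span_singleton_self _))
  have hg : ((f x)⁻¹ • f) (y - x) = 0 := by simp only [LinearMap.smul_apply, hfu, smul_zero]
  refine ⟨(LinearMap.GeneralLinearGroup.generalLinearEquiv K V).symm
    (LinearEquiv.transvection hg), ?_, ?_, ?_⟩
  · have h1 := congrArg Units.val (LinearEquiv.transvection.det_eq_one hg)
    rw [LinearEquiv.coe_det] at h1
    exact h1
  · intro t ht
    have : f t = 0 := hf (Submodule.mem_sup_left ht)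
    change t + ((f x)⁻¹ • f) t • (y - x) = t
    simp [this]
  · change x + ((f x)⁻¹ • f) x • (y - x) = y
    simp [hfx]

theorem trans_two {T : Submodule K V} (hT : Module.finrank K T + 2 ≤ Module.finrank K V)
    {x y : V} (hx : x ∉ T) (hy : y ∉ T) :
    ∃ s : (Module.End K V)ˣ, LinearMap.det (s : Module.End K V) = 1 ∧
      (∀ t ∈ T, (s : Module.End K V) t = t) ∧ (s : Module.End K V) x = y := by
  by_cases h : x ∈ T ⊔ Submodule.span K {y - x}
  · obtain ⟨a, ha⟩ := mem_sup_span.1 h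
    have ha0 : a ≠ 0 := by
      rintro rfl
      simp at ha
      exact hx ha
    have hyx : y ∈ T ⊔ Submodule.span K {x} := by
      refine mem_sup_span.2 ⟨a⁻¹ * (1 + a), ?_⟩
      have := T.smul_mem (-a⁻¹) ha
      convert this using 1
      have : a⁻¹ * a = 1 := inv_mul_cancel₀ ha0
      linear_combination (norm := module) this • (x - y) - this • x
    obtain ⟨z, hz⟩ := exists_notMem_of_lt (R := T ⊔ Submodule.span K {x})
      (lt_of_le_of_lt (finrank_sup_span_le T x) (by omega))
    have hz' : z ∉ T ⊔ Submodule.span K {y} := by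
      intro h'
      refine hz ((sup_le le_sup_left ?_ : T ⊔ Submodule.span K {y} ≤ _) h')
      simpa using hyx
    have h1 : x ∉ T ⊔ Submodule.span K {z - x} := by
      intro h1
      obtain ⟨b, hb⟩ := mem_sup_span.1 h1
      have hb0 : b ≠ 0 := by
        rintro rfl
        simp at hb
        exact hx hb
      refine hz (mem_sup_span.2 ⟨b⁻¹ * (1 + b), ?_⟩)
      have := T.smul_mem (-b⁻¹) hb
      convert this using 1
      have : b⁻¹ * b = 1 := inv_mul_cancel₀ hb0
      linear_combination (norm := module) this • (x - z) - this • x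
    have h2 : z ∉ T ⊔ Submodule.span K {y - z} := by
      intro h1
      obtain ⟨b, hb⟩ := mem_sup_span.1 h1
      by_cases hb0 : 1 + b = 0
      · apply hy
        obtain rfl : b = -1 := by linear_combination hb0
        simpa using hb
      · refine hz' (mem_sup_span.2 ⟨(1 + b)⁻¹ * b, ?_⟩)
        have := T.smul_mem ((1 + b)⁻¹) hb
        convert this using 1
        have : (1 + b)⁻¹ * (1 + b) = 1 := inv_mul_cancel₀ hb0
        linear_combination (norm := module) -this • z
    obtain ⟨s, hs, hs1, hs2⟩ := trans_one h1
    obtain ⟨s', hs', hs1', hs2'⟩ := trans_one h2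
    refine ⟨s' * s, by simp [hs, hs'], fun t ht => ?_, ?_⟩
    · simp [hs1 t ht, hs1' t ht]
    · simp [hs2, hs2']
  · exact trans_one h

theorem crit_choice {R : Submodule K V} (hR : Module.finrank K R + 2 ≤ Module.finrank K V)
    (c : (Module.End K V)ˣ) (hc : ∀ μ : K, μ ≠ 0 → Module.finrank K R <
      Module.finrank K (LinearMap.range ((c : Module.End K V) - μ • (1 : Module.End K V)))) :
    ∃ y, y ∉ R ∧ (c : Module.End K V) y ∉ R ⊔ Submodule.span K {y} := by
  by_contra! hcon
  obtain ⟨y0, hy0⟩ := exists_notMem_of_lt (R := R) (by omega)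
  obtain ⟨l0, hl0⟩ := mem_sup_span.1 (hcon y0 hy0)
  obtain ⟨y1, hy1⟩ := exists_notMem_of_lt (R := R ⊔ Submodule.span K {y0})
      (lt_of_le_of_lt (finrank_sup_span_le R y0) (by omega))
  have key : ∀ y, y ∉ R ⊔ Submodule.span K {y0} → (c : Module.End K V) y - l0 • y ∈ R := by
    intro y hy
    have hyR : y ∉ R := fun h => hy (Submodule.mem_sup_left h)
    have hyR' : y + y0 ∉ R := fun h => hy (mem_sup_span.2 ⟨-1, by simpa using h⟩)
    obtain ⟨l1, hl1⟩ := mem_sup_span.1 (hcon y hyR)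
    obtain ⟨l2, hl2⟩ := mem_sup_span.1 (hcon _ hyR')
    have h3 : (l2 - l1) • y + (l2 - l0) • y0 ∈ R := by
      have := R.sub_mem (R.add_mem hl1 hl0) hl2
      convert this using 1
      rw [map_add]
      module
    have h21 : l2 = l1 := by
      by_contra hne
      have hne' : l2 - l1 ≠ 0 := sub_ne_zero.2 hne
      apply hy
      refine mem_sup_span.2 ⟨-(l2 - l1)⁻¹ * (l2 - l0), ?_⟩
      have := R.smul_mem (l2 - l1)⁻¹ h3
      convert this using 1
      have : (l2 - l1)⁻¹ * (l2 - l1) = 1 := inv_mul_cancel₀ hne'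
      linear_combination (norm := module) -this • y
    subst h21
    have h20 : l2 = l0 := by
      by_contra hne
      have hne' : l2 - l0 ≠ 0 := sub_ne_zero.2 hne
      rw [sub_self, zero_smul, zero_add] at h3
      exact hy0 ((R.smul_mem_iff hne').1 h3)
    rw [← h20]
    exact hl1
  have all : ∀ y, (c : Module.End K V) y - l0 • y ∈ R := by
    intro y
    by_cases hy : y ∈ R ⊔ Submodule.span K {y0}
    · have h1 := key y1 hy1
      have h2 := key (y + y1) (fun h => hy1 ((Submodule.add_mem_iff_right _ hy).1 h))
      have := R.sub_mem h2 h1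
      convert this using 1
      rw [map_add]
      module
    · exact key y hy
  have hl0' : l0 ≠ 0 := by
    rintro rfl
    obtain ⟨z, hz⟩ := exists_notMem_of_lt (R := R) (by omega)
    apply hz
    have := all (((c⁻¹ : (Module.End K V)ˣ) : Module.End K V) z)
    rw [zero_smul, sub_zero, ← Module.End.mul_apply, Units.mul_inv] at this
    simpa using this
  have hle : LinearMap.range ((c : Module.End K V) - l0 • (1 : Module.End K V)) ≤ R := by
    rintro _ ⟨y, rfl⟩
    simpa using all y
  exact absurd (Submodule.finrank_mono hle) (not_le.2 (hc l0 hl0'))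

end LA

section Traj
variable {K V : Type*} [Field K] [AddCommGroup V] [Module K V] {r : ℕ}

/-- A group element or its inverse. -/
def sg (g : (Module.End K V)ˣ) (e : Bool) : (Module.End K V)ˣ := if e then g else g⁻¹

/-- Trajectory of a vector under a word, processed from right to left. -/
def run (h : Fin r → (Module.End K V)ˣ) : List (Fin r × Bool × (Module.End K V)ˣ) → V → V
  | [], x => x
  | p :: L, x => run h L ((p.2.2 : Module.End K V) ((sg (h p.1) p.2.1 : Module.End K V) x))

/-- A tuple in `SL(V)` with protected domains and codomains. -/
structure St (h : Fin r → (Module.End K V)ˣ) (A : Fin r → Bool → Submodule K V) : Prop where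
  det : ∀ i, LinearMap.det (h i : Module.End K V) = 1
  maps : ∀ i e, ∀ a ∈ A i e, (sg (h i) e : Module.End K V) a ∈ A i (!e)

/-- The second state extends the first. -/
def Ext (h : Fin r → (Module.End K V)ˣ) (A : Fin r → Bool → Submodule K V)
    (h' : Fin r → (Module.End K V)ˣ) (A' : Fin r → Bool → Submodule K V) : Prop :=
  ∀ i e, A i e ≤ A' i e ∧
    ∀ a ∈ A i e, (sg (h' i) e : Module.End K V) a = (sg (h i) e : Module.End K V) a

theorem Ext.refl (h : Fin r → (Module.End K V)ˣ) (A : Fin r → Bool → Submodule K V) :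
    Ext h A h A := fun _ _ => ⟨le_rfl, fun _ _ => rfl⟩

theorem Ext.trans {h h' h'' : Fin r → (Module.End K V)ˣ} {A A' A'' : Fin r → Bool → Submodule K V}
    (h1 : Ext h A h' A') (h2 : Ext h' A' h'' A'') : Ext h A h'' A'' := fun i e =>
  ⟨(h1 i e).1.trans (h2 i e).1, fun a ha =>
    ((h2 i e).2 a ((h1 i e).1 ha)).trans ((h1 i e).2 a ha)⟩

/-- Enlarged protected subspaces. -/
def upd (A : Fin r → Bool → Submodule K V) (i : Fin r) (e : Bool) (x y : V) :
    Fin r → Bool → Submodule K V := fun i' e' =>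
  if i' = i then A i e' ⊔ Submodule.span K {if e' = e then x else y} else A i' e'

theorem inv_app (g : (Module.End K V)ˣ) (x : V) :
    ((g⁻¹ : (Module.End K V)ˣ) : Module.End K V) ((g : Module.End K V) x) = x := by
  rw [← Module.End.mul_apply, Units.inv_mul, Module.End.one_apply]

theorem app_inv (g : (Module.End K V)ˣ) (x : V) :
    (g : Module.End K V) (((g⁻¹ : (Module.End K V)ˣ) : Module.End K V) x) = x := by
  rw [← Module.End.mul_apply, Units.mul_inv, Module.End.one_apply]

theorem det_inv_one (g : (Module.End K V)ˣ) (hg : LinearMap.det (g : Module.End K V) = 1) :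
    LinearMap.det ((g⁻¹ : (Module.End K V)ˣ) : Module.End K V) = 1 := by
  have : LinearMap.det ((g⁻¹ : (Module.End K V)ˣ) : Module.End K V)
      * LinearMap.det (g : Module.End K V) = 1 := by
    rw [← map_mul, Units.inv_mul, map_one]
  rwa [hg, mul_one] at this

set_option linter.unusedSectionVars false

variable [FiniteDimensional K V]

theorem step_elem {D R : Submodule K V} (g : (Module.End K V)ˣ)
    (hg : LinearMap.det (g : Module.End K V) = 1)
    (hD : ∀ a ∈ D, (g : Module.End K V) a ∈ R)
    (hR : ∀ a ∈ R, ((g⁻¹ : (Module.End K V)ˣ) : Module.End K V) a ∈ D)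
    (hdim : Module.finrank K R + 2 ≤ Module.finrank K V) {x y : V} (hx : x ∉ D) (hy : y ∉ R) :
    ∃ g' : (Module.End K V)ˣ, LinearMap.det (g' : Module.End K V) = 1 ∧
      (∀ a ∈ D, (g' : Module.End K V) a = (g : Module.End K V) a) ∧
      (∀ a ∈ R, ((g'⁻¹ : (Module.End K V)ˣ) : Module.End K V) a =
        ((g⁻¹ : (Module.End K V)ˣ) : Module.End K V) a) ∧
      (g' : Module.End K V) x = y ∧ ((g'⁻¹ : (Module.End K V)ˣ) : Module.End K V) y = x := by
  have hgx : (g : Module.End K V) x ∉ R := fun h => hx (by simpa [inv_app] using hR _ h)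
  obtain ⟨s, hs, hs1, hs2⟩ := trans_two hdim hgx hy
  have e1 : ∀ a ∈ D, ((s * g : (Module.End K V)ˣ) : Module.End K V) a = (g : Module.End K V) a := by
    intro a ha
    rw [Units.val_mul, Module.End.mul_apply, hs1 _ (hD a ha)]
  have e2 : ((s * g : (Module.End K V)ˣ) : Module.End K V) x = y := by
    rw [Units.val_mul, Module.End.mul_apply, hs2]
  refine ⟨s * g, by simp [hs, hg], e1, ?_, e2, ?_⟩
  · intro a ha
    have := e1 _ (hR a ha)
    rw [app_inv] at this
    rw [← inv_app (s * g) (((g⁻¹ : (Module.End K V)ˣ) : Module.End K V) a), this]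
  · rw [← e2, inv_app]

theorem step_sg {D : Bool → Submodule K V} (g : (Module.End K V)ˣ)
    (hg : LinearMap.det (g : Module.End K V) = 1) (e : Bool)
    (hD : ∀ e, ∀ a ∈ D e, (sg g e : Module.End K V) a ∈ D (!e))
    (hdim : ∀ e, Module.finrank K (D e) + 2 ≤ Module.finrank K V) {x y : V}
    (hx : x ∉ D e) (hy : y ∉ D (!e)) :
    ∃ g' : (Module.End K V)ˣ, LinearMap.det (g' : Module.End K V) = 1 ∧
      (∀ e, ∀ a ∈ D e, (sg g' e : Module.End K V) a = (sg g e : Module.End K V) a) ∧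
      (sg g' e : Module.End K V) x = y ∧ (sg g' (!e) : Module.End K V) y = x := by
  cases e with
  | true =>
    obtain ⟨g', h1, h2, h3, h4, h5⟩ := step_elem g hg (D := D true) (R := D false)
      (by simpa [sg] using hD true) (by simpa [sg] using hD false) (hdim _) hx hy
    refine ⟨g', h1, ?_, by simpa [sg] using h4, by simpa [sg] using h5⟩
    intro e
    cases e
    · simpa [sg] using h3
    · simpa [sg] using h2
  | false =>
    obtain ⟨g', h1, h2, h3, h4, h5⟩ := step_elem g⁻¹ (det_inv_one g hg) (D := D false)
      (R := D true)
      (by simpa [sg] using hD false) (by simpa [sg] using hD true) (hdim _) hx hy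
    refine ⟨g'⁻¹, det_inv_one _ h1, ?_, by simpa [sg] using h4, by simpa [sg] using h5⟩
    intro e
    cases e
    · simpa [sg] using h2
    · simpa [sg] using h3

theorem step {h : Fin r → (Module.End K V)ˣ} {A : Fin r → Bool → Submodule K V} (hS : St h A)
    (i : Fin r) (e : Bool) (hdim : ∀ e, Module.finrank K (A i e) + 2 ≤ Module.finrank K V)
    {x y : V} (hx : x ∉ A i e) (hy : y ∉ A i (!e)) :
    ∃ h', St h' (upd A i e x y) ∧ Ext h A h' (upd A i e x y) ∧
      (sg (h' i) e : Module.End K V) x = y := by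
  obtain ⟨g', h1, h2, h3, h4⟩ := step_sg (h i) (hS.det i) e (hS.maps i) hdim hx hy
  refine ⟨Function.update h i g', ⟨?_, ?_⟩, ?_, by simpa using h3⟩
  · intro j
    by_cases hj : j = i
    · subst hj
      simpa using h1
    · simpa [hj] using hS.det j
  · intro j e' a ha
    by_cases hj : j = i
    · subst hj
      simp only [upd, if_true, Function.update_self] at ha ⊢
      obtain ⟨b, hb⟩ := mem_sup_span.1 ha
      have h5 := hS.maps j e' _ hb
      rw [← h2 e' _ hb, map_sub, map_smul] at h5
      refine mem_sup_span.2 ⟨b, ?_⟩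
      convert h5 using 3
      by_cases hee : e' = e
      · subst hee
        simp [h3]
      · obtain rfl : e' = !e := by cases e <;> cases e' <;> simp_all
        simp [h4]
    · simp only [upd, hj, if_false] at ha ⊢
      simpa [hj] using hS.maps j e' a ha
  · intro j e'
    by_cases hj : j = i
    · subst hj
      refine ⟨?_, fun a ha => ?_⟩
      · simp only [upd, if_true]
        exact le_sup_left
      · simpa using h2 e' a ha
    · refine ⟨?_, fun a ha => ?_⟩
      · simp [upd, hj]
      · simp [hj]

theorem finrank_upd {A : Fin r → Bool → Submodule K V} {k : ℕ}
    (hA : ∀ i e, Module.finrank K (A i e) ≤ k) (i : Fin r) (e : Bool) (x y : V) :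
    ∀ i' e', Module.finrank K (upd A i e x y i' e') ≤ k + 1 := by
  intro i' e'
  by_cases hi : i' = i
  · have h1 : upd A i e x y i' e' = A i e' ⊔ Submodule.span K {if e' = e then x else y} := by
      simp [upd, hi]
    rw [h1]
    exact (finrank_sup_span_le _ _).trans (Nat.add_le_add_right (hA _ _) 1)
  · have h1 : upd A i e x y i' e' = A i' e' := by simp [upd, hi]
    rw [h1]
    exact (hA _ _).trans (Nat.le_succ _)

/-- The condition on consecutive letters. -/
def Rel (N : ℕ) (p p' : Fin r × Bool × (Module.End K V)ˣ) : Prop :=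
  p.1 = p'.1 → p'.2.1 = (!p.2.1) → ∀ μ : K, μ ≠ 0 → N < Module.finrank K
    (LinearMap.range ((p.2.2 : Module.End K V) - μ • (1 : Module.End K V)))

theorem comap_ne_top {Q : Submodule K V} (hQ : Q ≠ ⊤) (c : (Module.End K V)ˣ) :
    Q.comap (c : Module.End K V) ≠ ⊤ := by
  intro h
  apply hQ
  rw [Submodule.eq_top_iff'] at h ⊢
  intro x
  have := h (((c⁻¹ : (Module.End K V)ˣ) : Module.End K V) x)
  rwa [Submodule.mem_comap, app_inv] at this

theorem avoid_map {P Q : Submodule K V} (hP : P ≠ ⊤) (hQ : Q ≠ ⊤) (c : (Module.End K V)ˣ) :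
    ∃ y, y ∉ P ∧ (c : Module.End K V) y ∉ Q := by
  exact avoid_two hP (comap_ne_top hQ c)

theorem choose_next {N k : ℕ} (hN : N + 1 ≤ Module.finrank K V)
    {A : Fin r → Bool → Submodule K V} (hA : ∀ i e, Module.finrank K (A i e) ≤ k)
    (hk : k + 1 ≤ N) (p p' : Fin r × Bool × (Module.End K V)ˣ) (hp : Rel N p p') (x : V) :
    ∃ y, y ∉ A p.1 (!p.2.1) ∧
      (p.2.2 : Module.End K V) y ∉ upd A p.1 p.2.1 x y p'.1 p'.2.1 := by
  obtain ⟨i, e, c⟩ := p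
  obtain ⟨i', e', c'⟩ := p'
  have hlt : ∀ i e, A i e ≠ ⊤ := fun i e => ne_top_of_lt (by have := hA i e; omega)
  simp only [Rel] at hp ⊢
  by_cases hi : i' = i
  · subst hi
    by_cases he : e' = e
    · subst he
      simp only [upd, if_true]
      refine avoid_map (hlt _ _) (ne_top_of_lt ?_) c
      have h1 := finrank_sup_span_le (A i' e') x
      have h2 := hA i' e'
      omega
    · obtain rfl : e' = !e := by cases e <;> cases e' <;> simp_all
      have h2 := hA i' (!e)
      obtain ⟨y, hy, hy'⟩ := crit_choice (R := A i' (!e)) (by omega) c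
        (fun μ hμ => lt_of_le_of_lt (by omega) (hp rfl rfl μ hμ))
      exact ⟨y, hy, by simpa [upd] using hy'⟩
  · simp only [upd, hi, if_false]
    exact avoid_map (hlt _ _) (hlt _ _) c

theorem traj {N : ℕ} (hN : N + 1 ≤ Module.finrank K V) {E : Submodule K V} (hE : E ≠ ⊤)
    (L : List (Fin r × Bool × (Module.End K V)ˣ)) :
    ∀ (p : Fin r × Bool × (Module.End K V)ˣ), List.IsChain (Rel N) (p :: L) →
    ∀ (h : Fin r → (Module.End K V)ˣ) (A : Fin r → Bool → Submodule K V) (k : ℕ) (x : V),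
    St h A → (∀ i e, Module.finrank K (A i e) ≤ k) → k + (L.length + 1) ≤ N → x ∉ A p.1 p.2.1 →
    ∃ h' A', St h' A' ∧ Ext h A h' A' ∧
      (∀ i e, Module.finrank K (A' i e) ≤ k + (L.length + 1)) ∧
      ∃ z, z ∉ E ∧ ∀ h'' A'', Ext h' A' h'' A'' → run h'' (p :: L) x = z := by
  induction L with
  | nil =>
    intro p _ h A k x hS hA hk hx
    simp only [List.length_nil, zero_add] at hk ⊢
    obtain ⟨y, hy, hy'⟩ := avoid_map (P := A p.1 (!p.2.1))
      (ne_top_of_lt (by have := hA p.1 (!p.2.1); omega)) hE p.2.2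
    obtain ⟨h', h1, h2, h3⟩ := step hS p.1 p.2.1
      (fun e => by have := hA p.1 e; omega) hx hy
    refine ⟨h', _, h1, h2, finrank_upd hA _ _ _ _, _, hy', ?_⟩
    intro h'' A'' hext
    have hxm : x ∈ upd A p.1 p.2.1 x y p.1 p.2.1 := by
      simp only [upd, if_true]
      exact Submodule.mem_sup_right (Submodule.mem_span_singleton_self _)
    simp only [run]
    rw [(hext p.1 p.2.1).2 x hxm, h3]
  | cons p' L ih =>
    intro p hch h A k x hS hA hk hx
    rw [List.isChain_cons_cons] at hch
    simp only [List.length_cons] at hk ⊢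
    obtain ⟨y, hy, hy'⟩ := choose_next hN hA (by omega) p p' hch.1 x
    obtain ⟨h1, hS1, hE1, h3⟩ := step hS p.1 p.2.1
      (fun e => by have := hA p.1 e; omega) hx hy
    obtain ⟨h', A', hS', hE', hA', z, hz, hz'⟩ := ih p' hch.2 h1 _ (k + 1) _ hS1
      (finrank_upd hA _ _ _ _) (by omega) hy'
    refine ⟨h', A', hS', hE1.trans hE', fun i e => (hA' i e).trans (by omega), z, hz, ?_⟩
    intro h'' A'' hext
    have hxm : x ∈ upd A p.1 p.2.1 x y p.1 p.2.1 := by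
      simp only [upd, if_true]
      exact Submodule.mem_sup_right (Submodule.mem_span_singleton_self _)
    rw [← hz' h'' A'' hext]
    conv_lhs => rw [run]
    rw [((hE'.trans hext) p.1 p.2.1).2 x hxm, h3]

end Traj

section Main
variable {K V : Type*} [Field K] [AddCommGroup V] [Module K V] [FiniteDimensional K V] {r : ℕ}

theorem multi {N m l : ℕ} (hN : N + 1 ≤ Module.finrank K V) (hm : m * l ≤ N) (hm2 : 2 * m ≤ N)
    (L : List (Fin r × Bool × (Module.End K V)ˣ)) (p : Fin r × Bool × (Module.End K V)ˣ)
    (hL : L.length + 1 = l) (hch : List.IsChain (Rel N) (p :: L)) (q c : (Module.End K V)ˣ)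
    (k : ℕ) : k ≤ m →
    ∃ (h : Fin r → (Module.End K V)ˣ) (A : Fin r → Bool → Submodule K V) (W B : Submodule K V),
      St h A ∧ (∀ i e, Module.finrank K (A i e) ≤ k * l) ∧ Module.finrank K B ≤ 2 * k ∧
      ∀ h'' A'', Ext h A h'' A'' → ∀ f : Module.End K V,
        (∀ v, f v = (q : Module.End K V) (run h'' (p :: L) ((c : Module.End K V) v))) →
        ∀ μ : K, W.map (f - μ • (1 : Module.End K V)) ≤ B ∧
          k ≤ Module.finrank K ↥(W.map (f - μ • (1 : Module.End K V))) := by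
  induction k with
  | zero =>
    intro _
    refine ⟨fun _ => 1, fun _ _ => ⊥, ⊥, ⊥, ⟨by simp, ?_⟩, by simp, by simp, by simp⟩
    intro i e a ha
    rw [Submodule.mem_bot] at ha ⊢
    simp [ha]
  | succ k ih =>
    intro hk
    obtain ⟨h, A, W, B, hS, hA, hB, hf⟩ := ih (by omega)
    have hkl : k * l + l ≤ m * l := by
      have := Nat.mul_le_mul_right l hk
      rwa [Nat.succ_mul] at this
    obtain ⟨x, hx, -⟩ := avoid_two
      (comap_ne_top (Q := A p.1 p.2.1) (ne_top_of_lt (by have := hA p.1 p.2.1; omega)) c)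
      (comap_ne_top (Q := A p.1 p.2.1) (ne_top_of_lt (by have := hA p.1 p.2.1; omega)) c)
    have hBx := finrank_sup_span_le B x
    have hE : (B ⊔ Submodule.span K {x}).comap (q : Module.End K V) ≠ ⊤ :=
      comap_ne_top (ne_top_of_lt (by omega)) q
    obtain ⟨h', A', hS', hE', hA', z, hz, hz'⟩ := traj hN hE L p hch h A (k * l) _ hS hA
      (by omega) hx
    have hBz := finrank_sup_span_le (B ⊔ Submodule.span K {x}) ((q : Module.End K V) z)
    refine ⟨h', A', W ⊔ Submodule.span K {x},
      B ⊔ Submodule.span K {x} ⊔ Submodule.span K {(q : Module.End K V) z}, hS', ?_, ?_, ?_⟩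
    · intro i e
      rw [Nat.succ_mul, ← hL]
      have := hA' i e
      rw [← hL] at this
      exact this
    · omega
    · intro h'' A'' hext f hfv μ
      obtain ⟨h1, h2⟩ := hf h'' A'' (hE'.trans hext) f hfv μ
      have hfx : f x = (q : Module.End K V) z := by rw [hfv, hz' h'' A'' hext]
      have hmap : (W ⊔ Submodule.span K {x}).map (f - μ • (1 : Module.End K V)) =
          W.map (f - μ • (1 : Module.End K V)) ⊔
            Submodule.span K {(q : Module.End K V) z - μ • x} := by
        rw [Submodule.map_sup, Submodule.map_span, Set.image_singleton]
        simp [hfx]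
      rw [hmap]
      constructor
      · refine sup_le (h1.trans (le_sup_left.trans le_sup_left)) ?_
        rw [Submodule.span_singleton_le_iff_mem]
        refine Submodule.sub_mem _
          (Submodule.mem_sup_right (Submodule.mem_span_singleton_self _)) ?_
        exact Submodule.smul_mem _ _ (Submodule.mem_sup_left
          (Submodule.mem_sup_right (Submodule.mem_span_singleton_self _)))
      · refine lt_of_le_of_lt h2 (Submodule.finrank_lt_finrank_of_lt ?_)
        refine lt_of_le_of_ne le_sup_left ?_
        intro heq
        apply hz
        have : (q : Module.End K V) z - μ • x ∈ W.map (f - μ • (1 : Module.End K V)) := by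
          rw [heq]
          exact Submodule.mem_sup_right (Submodule.mem_span_singleton_self _)
        exact mem_sup_span.2 ⟨μ, h1 this⟩

/-- The word as a list, from right to left. -/
noncomputable def mk {l : ℕ} (c : Fin (l + 1) → (Module.End K V)ˣ) (ι : Fin l → Fin r)
    (ε : Fin l → ℤ) : List (Fin r × Bool × (Module.End K V)ˣ) :=
  List.ofFn fun j : Fin l => (ι j.rev, decide (ε j.rev = 1), c j.rev.castSucc)

theorem wordEval_eq_run (h : Fin r → (Module.End K V)ˣ) : ∀ {l : ℕ}
    (c : Fin (l + 1) → (Module.End K V)ˣ) (ι : Fin l → Fin r) (ε : Fin l → ℤ)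
    (_ : ∀ j, ε j = 1 ∨ ε j = -1) (v : V),
    ((wordEval c ι ε h : (Module.End K V)ˣ) : Module.End K V) v =
      run h (mk c ι ε) ((c (Fin.last l) : Module.End K V) v) := by
  intro l
  induction l with
  | zero =>
    intro c ι ε _ v
    simp [wordEval, mk, run]
  | succ l ih =>
    intro c ι ε hε v
    have h1 : wordEval c ι ε h = wordEval (fun j => c j.castSucc) (fun j => ι j.castSucc)
        (fun j => ε j.castSucc) h * h (ι (Fin.last l)) ^ ε (Fin.last l) * c (Fin.last (l + 1)) := by
      simp only [wordEval]
      rw [List.ofFn_succ', List.concat_eq_append, List.prod_append, List.prod_singleton]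
      simp [mul_assoc]
    have h2 : mk c ι ε = (ι (Fin.last l), decide (ε (Fin.last l) = 1), c (Fin.last l).castSucc) ::
        mk (fun j => c j.castSucc) (fun j => ι j.castSucc) (fun j => ε j.castSucc) := by
      simp only [mk]
      rw [List.ofFn_succ]
      simp [Fin.rev_succ]
    have h3 : h (ι (Fin.last l)) ^ ε (Fin.last l) =
        sg (h (ι (Fin.last l))) (decide (ε (Fin.last l) = 1)) := by
      rcases hε (Fin.last l) with h | h <;> simp [h, sg]
    rw [h1, h2, run, Units.val_mul, Units.val_mul, Module.End.mul_apply, Module.End.mul_apply,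
      ih _ _ _ (fun j => hε _), h3]

theorem projNorm_le (g : (Module.End K V)ˣ) (μ : K) (hμ : μ ≠ 0) :
    projNorm g ≤ Module.finrank K
      (LinearMap.range ((g : Module.End K V) - μ • (1 : Module.End K V))) :=
  Nat.sInf_le ⟨Units.mk0 μ hμ, rfl⟩

theorem projDiam_le : projDiamGL K V ≤ Module.finrank K V := by
  refine csSup_le ⟨_, 1, rfl⟩ ?_
  rintro m ⟨g, rfl⟩
  exact (projNorm_le g 1 one_ne_zero).trans (Submodule.finrank_le _)

theorem le_projNorm (g : (Module.End K V)ˣ) (m : ℕ) (hm : ∀ μ : K, m ≤ Module.finrank K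
      (LinearMap.range ((g : Module.End K V) - μ • (1 : Module.End K V)))) :
    m ≤ projNorm g := by
  refine le_csInf ⟨_, 1, rfl⟩ ?_
  rintro _ ⟨μ, rfl⟩
  exact hm _

theorem chain_mk {l N : ℕ} (c : Fin (l + 1) → (Module.End K V)ˣ) (ι : Fin l → Fin r)
    (ε : Fin l → ℤ) (hε : ∀ j, ε j = 1 ∨ ε j = -1) (hN : N < critLength c ι ε) :
    List.IsChain (Rel N) (mk c ι ε) := by
  unfold mk
  rw [List.isChain_ofFn]
  intro t ht
  intro h1 h2 μ hμ
  refine lt_of_lt_of_le (lt_of_lt_of_le hN ?_) (projNorm_le _ μ hμ)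
  refine Nat.sInf_le (Set.mem_insert_of_mem _ ⟨l - 2 - t, by omega, ?_, ?_, ?_⟩)
  · have e1 : (⟨l - 2 - t, by omega⟩ : Fin l) = Fin.rev ⟨t + 1, ht⟩ := by
      ext; simp [Fin.val_rev]; omega
    have e2 : (⟨l - 2 - t + 1, by omega⟩ : Fin l) = Fin.rev ⟨t, by omega⟩ := by
      ext; simp [Fin.val_rev]; omega
    rw [e1, e2]
    exact h1.symm
  · have e1 : (⟨l - 2 - t, by omega⟩ : Fin l) = Fin.rev ⟨t + 1, ht⟩ := by
      ext; simp [Fin.val_rev]; omega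
    have e2 : (⟨l - 2 - t + 1, by omega⟩ : Fin l) = Fin.rev ⟨t, by omega⟩ := by
      ext; simp [Fin.val_rev]; omega
    rw [e1, e2]
    simp only at h2
    rcases hε (Fin.rev ⟨t + 1, ht⟩) with h | h <;>
      rcases hε (Fin.rev ⟨t, by omega⟩) with h' | h' <;> rw [h, h'] at h2 ⊢ <;> simp at h2 ⊢
  · congr 2
    ext; simp [Fin.val_rev]; omega

end Main

end WordDiam

/-- Diameter bound for the image of a word map with constants: the word image
`w(SL(V)^r)` has diameter at least `‖w‖_crit / l - 1` in the projective rank seminorm,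
i.e. there are points of the image at projective rank distance `≥ ‖w‖_crit / l - 1`. -/
theorem diam_word_image_lower_bound {K V : Type*} [Field K] [AddCommGroup V] [Module K V]
    [FiniteDimensional K V] (hK : Finite K ∨ Nonempty (K ≃+* ℂ))
    {n l r : ℕ} (hn : Module.finrank K V = n) (hl : 2 ≤ l)
    (c : Fin (l + 1) → (Module.End K V)ˣ) (ι : Fin l → Fin r) (ε : Fin l → ℤ)
    (hε : ∀ j, ε j = 1 ∨ ε j = -1)
    -- the word is reduced with respect to `SL(V)`:
    (hredcrit : ∀ j : Fin l, ∀ hj : (j : ℕ) + 1 < l,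
      (ι j = ι ⟨(j : ℕ) + 1, hj⟩ ∧ ε j = -ε ⟨(j : ℕ) + 1, hj⟩) →
      c j.succ ∉ Subgroup.centralizer
        {g : (Module.End K V)ˣ | LinearMap.det (g : Module.End K V) = 1})
    (hrednoncrit : ∀ j : Fin l, ∀ hj : (j : ℕ) + 1 < l,
      ¬(ι j = ι ⟨(j : ℕ) + 1, hj⟩ ∧ ε j = -ε ⟨(j : ℕ) + 1, hj⟩) →
      (c j.succ = 1 ∨ c j.succ ∉ Subgroup.centralizer
        {g : (Module.End K V)ˣ | LinearMap.det (g : Module.End K V) = 1})) :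
    ∃ h h' : Fin r → (Module.End K V)ˣ,
      (∀ i, LinearMap.det ((h i : Module.End K V)) = 1) ∧
      (∀ i, LinearMap.det ((h' i : Module.End K V)) = 1) ∧
      critLength c ι ε ≤ l * (projNorm ((wordEval c ι ε h)⁻¹ * wordEval c ι ε h') + 1) := by
  classical
  by_cases hc0 : critLength c ι ε = 0
  · exact ⟨fun _ => 1, fun _ => 1, by simp, by simp, by simp [hc0]⟩
  have hcn : critLength c ι ε ≤ Module.finrank K V :=
    (Nat.sInf_le (Set.mem_insert _ _)).trans WordDiam.projDiam_le
  set m := (critLength c ι ε - 1) / l with hm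
  have h1 : m * l ≤ critLength c ι ε - 1 := Nat.div_mul_le_self _ _
  have h2 : critLength c ι ε - 1 < m * l + l := Nat.lt_div_mul_add (by omega)
  have h3 : 2 * m ≤ m * l := by
    rw [Nat.mul_comm 2]
    exact Nat.mul_le_mul_left m hl
  have hch := WordDiam.chain_mk (N := m * l) c ι ε hε (by omega)
  have hlen : (WordDiam.mk c ι ε).length = l := by simp [WordDiam.mk]
  have hrun := fun h => WordDiam.wordEval_eq_run h c ι ε hε
  generalize WordDiam.mk c ι ε = L at hch hlen hrun
  cases L with
  | nil =>
    simp at hlen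
    omega
  | cons p L =>
    obtain ⟨h, A, W, B, hS, -, -, hf⟩ := WordDiam.multi (N := m * l) (m := m) (l := l)
      (by omega) le_rfl h3 L p (by simpa using hlen) hch
      (wordEval c ι ε fun _ => 1)⁻¹ (c (Fin.last l)) m le_rfl
    refine ⟨fun _ => 1, h, by simp, hS.det, ?_⟩
    have h4 : m ≤ projNorm ((wordEval c ι ε fun _ => 1)⁻¹ * wordEval c ι ε h) := by
      refine WordDiam.le_projNorm _ _ fun μ => ?_
      refine (hf h A (WordDiam.Ext.refl h A) _ ?_ μ).2.trans
        (Submodule.finrank_mono LinearMap.map_le_range)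
      intro v
      rw [Units.val_mul, Module.End.mul_apply, hrun]
    have h5 := Nat.mul_le_mul_left l h4
    rw [Nat.mul_comm l m] at h5
    rw [Nat.mul_add, Nat.mul_one]
    omega
end

section
/- For any fixed prime power q, if w ∈ PSL_n(q) ∗ F_r is a non-singular mixed identity for PSL_n(q) (w(h₁,…,h_r) = 1 for all h_i, w non-trivial with non-trivial content), then the length of w satisfies |w| ≥ C·log(n)/log(log(n)) for some absolute constant C > 0 (for n large). -/
namespace MixedId

open Module

/-- Permutations realizing a nontrivial free group element. -/
lemma exists_perm_list {r : ℕ} (L : List (Fin r × ℤ)) (hε : ∀ x ∈ L, x.2 = 1 ∨ x.2 = -1)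
    (hne : (L.map (fun x => (FreeGroup.of x.1) ^ x.2)).prod ≠ 1) :
    ∃ (α : Type) (_ : Fintype α) (_ : DecidableEq α), Fintype.card α ≤ L.length + 1 ∧
      ∃ σ : Fin r → Equiv.Perm α, ∃ t : α, (L.map (fun x => (σ x.1) ^ x.2)).prod t ≠ t := by
  classical
  set g : List (Fin r × ℤ) → FreeGroup (Fin r) :=
    fun L => (L.map (fun x => (FreeGroup.of x.1) ^ x.2)).prod with hg
  set S : Finset (FreeGroup (Fin r)) :=
    (Finset.range (L.length + 1)).image (fun j => g (L.drop j)) with hS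
  have hmem : ∀ L', L' <:+ L → g L' ∈ S := by
    intro L' h
    rw [hS, Finset.mem_image]
    refine ⟨L.length - L'.length, ?_, ?_⟩
    · simp
    · rw [← List.suffix_iff_eq_drop.1 h]
  have key : ∀ i : Fin r, ∃ σ : Equiv.Perm S, ∀ x y : S, (y : FreeGroup (Fin r)) =
      FreeGroup.of i * x → σ x = y := by
    intro i
    let e : {x : S // FreeGroup.of i * (x : FreeGroup (Fin r)) ∈ S} ≃
        {x : S // (FreeGroup.of i)⁻¹ * (x : FreeGroup (Fin r)) ∈ S} :=
      { toFun := fun x => ⟨⟨FreeGroup.of i * (x.1 : FreeGroup (Fin r)), x.2⟩, by simp⟩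
        invFun := fun x => ⟨⟨(FreeGroup.of i)⁻¹ * (x.1 : FreeGroup (Fin r)), x.2⟩, by simp⟩
        left_inv := by intro x; ext; simp
        right_inv := by intro x; ext; simp }
    refine ⟨e.extendSubtype, fun x y h => ?_⟩
    have hx : FreeGroup.of i * (x : FreeGroup (Fin r)) ∈ S := by rw [← h]; exact y.2
    rw [Equiv.extendSubtype_apply_of_mem e x hx]
    apply Subtype.ext
    rw [h]; rfl
  choose σ hσ using key
  have hone : (1 : FreeGroup (Fin r)) ∈ S := by
    simpa [hg] using hmem [] (List.nil_suffix)
  have main : ∀ L', ∀ h : L' <:+ L, (L'.map (fun x => (σ x.1) ^ x.2)).prod ⟨1, hone⟩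
      = ⟨g L', hmem L' h⟩ := by
    intro L'
    induction L' with
    | nil => intro h; simp [hg]
    | cons x L' ih =>
      intro h
      have h' : L' <:+ L := (List.suffix_cons x L').trans h
      rw [List.map_cons, List.prod_cons, Equiv.Perm.mul_apply, ih h']
      rcases hε x (h.mem (by simp)) with h1 | h1
      · rw [h1, zpow_one]
        apply hσ
        simp [hg, h1]
      · rw [h1, zpow_neg_one, Equiv.Perm.inv_eq_iff_eq]
        symm
        apply hσ
        simp [hg, h1]
  refine ⟨S, inferInstance, inferInstance, ?_, σ, ⟨1, hone⟩, ?_⟩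
  · rw [Fintype.card_coe]
    exact Finset.card_image_le.trans (by simp)
  · rw [main L List.suffix_rfl]
    intro h
    exact hne (congrArg Subtype.val h)

lemma hom_sumCongr_eq_one {α K : Type} [Fintype α] [DecidableEq α] [CommMonoid K]
    (f : Equiv.Perm (α ⊕ α) →* K) (σ : Equiv.Perm α) : f (Equiv.Perm.sumCongr σ σ) = 1 := by
  have h1 : Equiv.Perm.sumCongr σ σ =
      Equiv.Perm.sumCongr σ 1 * Equiv.Perm.sumCongr 1 σ := by
    rw [Equiv.Perm.sumCongr_mul]; simp
  let s : Equiv.Perm (α ⊕ α) := Equiv.sumComm α α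
  have h2 : Equiv.Perm.sumCongr (1 : Equiv.Perm α) σ =
      s * Equiv.Perm.sumCongr σ (1 : Equiv.Perm α) * s⁻¹ := by
    ext x
    rcases x with x | x <;> rfl
  have h3 : f (Equiv.Perm.sumCongr (1 : Equiv.Perm α) σ) =
      f (Equiv.Perm.sumCongr σ (1 : Equiv.Perm α)) := by
    rw [h2, map_mul, map_mul, mul_comm (f s), mul_assoc, ← map_mul, mul_inv_cancel, map_one,
      mul_one]
  rw [h1, map_mul, h3]
  clear h1 h2 h3
  induction σ using Equiv.Perm.swap_induction_on with
  | one => rw [← map_mul, Equiv.Perm.sumCongr_mul]; simp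
  | swap_mul τ x y hxy ih =>
    have e1 : Equiv.Perm.sumCongr (Equiv.swap x y * τ) (1 : Equiv.Perm α) =
       Equiv.Perm.sumCongr (Equiv.swap x y) (1 : Equiv.Perm α) *
       Equiv.Perm.sumCongr τ (1 : Equiv.Perm α) := by
      rw [Equiv.Perm.sumCongr_mul]; simp
    have e2 : f (Equiv.Perm.sumCongr (Equiv.swap x y) (1 : Equiv.Perm α)) *
       f (Equiv.Perm.sumCongr (Equiv.swap x y) (1 : Equiv.Perm α)) = 1 := by
      rw [← map_mul, Equiv.Perm.sumCongr_mul]; simp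
    rw [e1, map_mul, mul_mul_mul_comm, e2, ih, one_mul]

section lin

variable {K V J : Type} [Field K] [Fintype K] [AddCommGroup V] [Module K V] [FiniteDimensional K V]
  [Fintype J]

/-- Greedy choice of vectors. -/
lemma greedy (φ : (J → K) →ₗ[K] (V →ₗ[K] V)) (U : Submodule K V) (N : Submodule K (J → K))
    (hN : ∀ a ∈ N, ∀ u ∈ U, φ a u = 0) (m : ℕ)
    (hbig : ∀ a ∉ N, finrank K (LinearMap.ker (φ a)) + Fintype.card J + Fintype.card J * m
      < finrank K U) (m' : ℕ) (hm : m' ≤ m) :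
    ∃ u : Fin m' → V, (∀ t, u t ∈ U) ∧
      ∀ f : Fin m' → (J → K), ∑ t, φ (f t) (u t) = 0 → ∀ t, f t ∈ N := by
  classical
  induction m' with
  | zero => exact ⟨fun t => t.elim0, fun t => t.elim0, fun f _ t => t.elim0⟩
  | succ p ih =>
    obtain ⟨u, hu, hf⟩ := ih (by omega)
    let P : (Fin p → (J → K)) →ₗ[K] V :=
      ∑ t, ((φ.flip (u t)) ∘ₗ LinearMap.proj t)
    have hP : ∀ f, P f = ∑ t, φ (f t) (u t) := by
      intro f; simp [P]
    set W := LinearMap.range P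
    have hW : finrank K W ≤ Fintype.card J * p := by
      refine (LinearMap.finrank_range_le P).trans ?_
      rw [Module.finrank_pi_fintype]
      simp [mul_comm]
    have : Finite V := Module.finite_of_finite K
    have : Fintype V := Fintype.ofFinite V
    have hq : 1 < Fintype.card K := Fintype.one_lt_card
    have ex : ∃ v ∈ U, ∀ a ∉ N, φ a v ∉ W := by
      by_contra! hcon
      have hcard : ∀ Z : Submodule K V, (Finset.univ.filter (fun v => v ∈ Z)).card =
          Fintype.card K ^ finrank K Z := by
        intro Z
        rw [← Module.card_eq_pow_finrank (K := K) (V := Z), ← Fintype.card_subtype]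
      have hsub : Finset.univ.filter (fun v => v ∈ U) ⊆
          (Finset.univ.filter (fun a : J → K => a ∉ N)).biUnion
            (fun a => Finset.univ.filter (fun v => v ∈ W.comap (φ a))) := by
        intro v hv
        simp only [Finset.mem_filter, Finset.mem_univ, true_and, Finset.mem_biUnion] at hv ⊢
        obtain ⟨a, ha, h⟩ := hcon v hv
        exact ⟨a, ha, h⟩
      have hle := (Finset.card_le_card hsub).trans Finset.card_biUnion_le
      rw [hcard] at hle
      have hUpos : 0 < Fintype.card K ^ finrank K U := by positivity
      have hb : ∀ a ∈ (Finset.univ.filter (fun a : J → K => a ∉ N)),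
          (Finset.univ.filter (fun v => v ∈ W.comap (φ a))).card ≤
            Fintype.card K ^ (finrank K U - 1 - Fintype.card J) := by
        intro a ha
        simp only [Finset.mem_filter, Finset.mem_univ, true_and] at ha
        rw [hcard]
        refine Nat.pow_le_pow_right hq.le ?_
        have h1 : finrank K (W.comap (φ a)) ≤ finrank K (LinearMap.ker (φ a)) + finrank K W := by
          let ψ : W.comap (φ a) →ₗ[K] W := (φ a).restrict (fun x hx => hx)
          have h2 := LinearMap.finrank_range_add_finrank_ker ψ
          have h3 : finrank K (LinearMap.range ψ) ≤ finrank K W := Submodule.finrank_le _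
          have h4 : finrank K (LinearMap.ker ψ) ≤ finrank K (LinearMap.ker (φ a)) := by
            let χ : LinearMap.ker ψ →ₗ[K] LinearMap.ker (φ a) :=
              LinearMap.codRestrict _ ((W.comap (φ a)).subtype ∘ₗ (LinearMap.ker ψ).subtype) (by
                rintro ⟨x, hx⟩
                have := congrArg Subtype.val (LinearMap.mem_ker.1 hx)
                simpa [ψ] using this)
            refine LinearMap.finrank_le_finrank_of_injective (f := χ) ?_
            intro x y h
            have := congrArg Subtype.val h
            exact Subtype.ext (Subtype.ext this)
          omega
        have h5 := hbig a ha
        have h6 : Fintype.card J * p ≤ Fintype.card J * m := Nat.mul_le_mul_left _ (by omega)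
        omega
      have hle2 := hle.trans (Finset.sum_le_card_nsmul _ _ _ hb)
      have hne : (Finset.univ.filter (fun a : J → K => a ∉ N)).Nonempty := by
        by_contra hne
        rw [Finset.not_nonempty_iff_eq_empty] at hne
        rw [hne] at hle2
        simp at hle2
      obtain ⟨a, ha⟩ := hne
      simp only [Finset.mem_filter, Finset.mem_univ, true_and] at ha
      have h5 := hbig a ha
      have hc : (Finset.univ.filter (fun a : J → K => a ∉ N)).card ≤
          Fintype.card K ^ Fintype.card J := by
        refine (Finset.card_le_univ _).trans ?_
        simp
      have h7 : Fintype.card K ^ finrank K U ≤ Fintype.card K ^ (finrank K U - 1) := by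
        calc _ ≤ _ := hle2
          _ ≤ Fintype.card K ^ Fintype.card J *
              Fintype.card K ^ (finrank K U - 1 - Fintype.card J) := by
            rw [smul_eq_mul]; exact Nat.mul_le_mul_right _ hc
          _ = _ := by rw [← pow_add]; congr 1; omega
      have h8 := (Nat.pow_le_pow_iff_right hq).1 h7
      omega
    obtain ⟨v, hvU, hv⟩ := ex
    refine ⟨Fin.cons v u, ?_, ?_⟩
    · intro t
      refine Fin.cases ?_ ?_ t
      · simpa using hvU
      · intro i; simpa using hu i
    · intro f hsum
      rw [Fin.sum_univ_succ] at hsum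
      simp only [Fin.cons_zero, Fin.cons_succ] at hsum
      have h0 : f 0 ∈ N := by
        by_contra h0
        apply hv _ h0
        refine ⟨fun t => - f t.succ, ?_⟩
        rw [hP]
        simp only [map_neg, LinearMap.neg_apply, Finset.sum_neg_distrib]
        exact (eq_neg_of_add_eq_zero_left hsum).symm
      rw [hN _ h0 v hvU, zero_add] at hsum
      intro t
      refine Fin.cases h0 ?_ t
      exact hf (fun t => f t.succ) hsum

/-- Choice of scale. -/
lemma scale (φ : (J → K) →ₗ[K] (V →ₗ[K] V)) (R : ℕ)
    (hn : R * 2 ^ (Fintype.card J + 1) < finrank K V + R) :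
    ∃ (U : Submodule K V) (N : Submodule K (J → K)), U ≠ ⊥ ∧
      (∀ a, a ∈ N ↔ ∀ u ∈ U, φ a u = 0) ∧
      ∀ a ∉ N, finrank K (LinearMap.ker (φ a)) + R < finrank K U + 1 := by
  classical
  by_contra! hcon
  let NN : Submodule K V → Submodule K (J → K) := fun U =>
    { carrier := {a | ∀ u ∈ U, φ a u = 0}
      add_mem' := by
        intro a b ha hb u hu
        simp [ha u hu, hb u hu]
      zero_mem' := by intro u hu; simp
      smul_mem' := by
        intro c a ha u hu
        simp [ha u hu] }
  have hNN : ∀ U a, a ∈ NN U ↔ ∀ u ∈ U, φ a u = 0 := fun U a => Iff.rfl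
  have claim : ∀ s, s ≤ Fintype.card J + 1 → ∃ U : Submodule K V, s ≤ finrank K (NN U) ∧
      finrank K V + R ≤ finrank K U + R * 2 ^ s := by
    intro s
    induction s with
    | zero => intro _; exact ⟨⊤, by simp, by simp⟩
    | succ s ih =>
      intro hs
      obtain ⟨U, h1, h2⟩ := ih (by omega)
      have h3 : R * 2 ^ s ≤ R * 2 ^ (Fintype.card J + 1) :=
        Nat.mul_le_mul_left _ (Nat.pow_le_pow_right (by norm_num) (by omega))
      have hU : U ≠ ⊥ := by
        rintro rfl
        simp at h2
        omega
      obtain ⟨a, ha, hlt⟩ := hcon U (NN U) hU (hNN U)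
      refine ⟨U ⊓ LinearMap.ker (φ a), ?_, ?_⟩
      · have : NN U < NN (U ⊓ LinearMap.ker (φ a)) := by
          refine lt_of_le_of_ne ?_ ?_
          · intro b hb u hu
            exact hb u hu.1
          · intro h
            apply ha
            rw [h]
            intro u hu
            exact hu.2
        have := Submodule.finrank_lt_finrank_of_lt this
        omega
      · have h4 := Submodule.finrank_sup_add_finrank_inf_eq U (LinearMap.ker (φ a))
        have h5 := Submodule.finrank_le (U ⊔ LinearMap.ker (φ a))
        have h6 : R * 2 ^ (s + 1) = 2 * (R * 2 ^ s) := by ring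
        rw [h6]
        omega
  obtain ⟨U, h1, -⟩ := claim _ le_rfl
  have := Submodule.finrank_le (NN U)
  simp at this
  omega

/-- The representation of the symmetric group commuting with the family. -/
lemma exists_rep (M : J → (V →ₗ[K] V)) (τ : Type) [Fintype τ] [DecidableEq τ] (j0 : J)
    (hj0 : M j0 = LinearMap.id)
    (hn : (1 + Fintype.card J + Fintype.card J * Fintype.card τ) * 2 ^ (Fintype.card J + 1)
      ≤ finrank K V) :
    ∃ (u : τ → V) (ρ : Equiv.Perm τ →* Module.End K V), LinearIndependent K u ∧
      ∀ σ j t, ρ σ (M j (u t)) = M j (u (σ t)) := by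
  classical
  let φ : (J → K) →ₗ[K] (V →ₗ[K] V) := Fintype.linearCombination K M
  have hφ : ∀ j, φ (Pi.single j 1) = M j := by
    intro j; simp [φ]
  obtain ⟨U, N, hU, hN, hbig⟩ := scale φ (1 + Fintype.card J + Fintype.card J * Fintype.card τ)
    (by omega)
  obtain ⟨u', hu', hind'⟩ := greedy φ U N (fun a ha => (hN a).1 ha) (Fintype.card τ)
    (fun a ha => by have := hbig a ha; omega) (Fintype.card τ) le_rfl
  let e := Fintype.equivFin τ
  let u : τ → V := fun t => u' (e t)
  have hu : ∀ t, u t ∈ U := fun t => hu' _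
  have hind : ∀ f : τ → (J → K), ∑ t, φ (f t) (u t) = 0 → ∀ t, f t ∈ N := by
    intro f hf t
    have := hind' (fun i => f (e.symm i)) (by
      rw [← hf, ← e.sum_comp]
      simp [u]) (e t)
    simpa using this
  obtain ⟨N', hN'⟩ := Submodule.exists_isCompl N
  let P : (τ → N') →ₗ[K] V := ∑ t, ((φ.flip (u t)) ∘ₗ N'.subtype ∘ₗ LinearMap.proj t)
  have hP : ∀ f, P f = ∑ t, φ (f t) (u t) := by
    intro f; simp [P]
  have hPinj : LinearMap.ker P = ⊥ := by
    rw [LinearMap.ker_eq_bot']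
    intro f hf
    rw [hP] at hf
    funext t
    have h1 := hind (fun t => (f t : J → K)) hf t
    have : (f t : J → K) ∈ N ⊓ N' := ⟨h1, (f t).2⟩
    rw [hN'.inf_eq_bot] at this
    exact Subtype.ext this
  obtain ⟨Q, hQ⟩ := P.exists_leftInverse_of_injective hPinj
  have hQ' : ∀ f, Q (P f) = f := fun f => LinearMap.congr_fun hQ f
  let S : Equiv.Perm τ → ((τ → N') →ₗ[K] (τ → N')) := fun σ => LinearMap.funLeft K N' (σ⁻¹ : Equiv.Perm τ)
  have hS : ∀ σ f t, S σ f t = f (σ⁻¹ t) := fun σ f t => rfl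
  let ρ : Equiv.Perm τ →* Module.End K V :=
    { toFun := fun σ => P ∘ₗ S σ ∘ₗ Q + (LinearMap.id - P ∘ₗ Q)
      map_one' := by
        have : S 1 = LinearMap.id := by
          ext f t
          rfl
        rw [this]
        ext x
        simp
      map_mul' := by
        intro σ σ'
        have : ∀ f, S (σ * σ') f = S σ (S σ' f) := by
          intro f; funext t; simp [hS]
        ext x
        simp [this, hQ'] }
  have hρ : ∀ σ f, ρ σ (P f) = P (S σ f) := by
    intro σ f
    simp [ρ, hQ']
  have hMU : ∀ j, ∃ b : N', ∀ v ∈ U, M j v = φ b v := by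
    intro j
    have : (Pi.single j 1 : J → K) ∈ N ⊔ N' := by rw [hN'.sup_eq_top]; trivial
    obtain ⟨a, ha, b, hb, hab⟩ := Submodule.mem_sup.1 this
    refine ⟨⟨b, hb⟩, fun v hv => ?_⟩
    rw [← hφ, ← hab, map_add, LinearMap.add_apply, (hN a).1 ha v hv, zero_add]
  refine ⟨u, ρ, ?_, ?_⟩
  · rw [Fintype.linearIndependent_iff]
    intro g hg
    by_contra! hcon
    obtain ⟨t, ht⟩ := hcon
    have h1 := hind (fun t => Pi.single j0 (g t)) (by
      rw [← hg]
      refine Finset.sum_congr rfl fun t _ => ?_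
      have : (Pi.single j0 (g t) : J → K) = g t • Pi.single j0 1 := by
        rw [← Pi.single_smul]; simp
      rw [this, map_smul, hφ, hj0]
      simp) t
    apply hU
    rw [Submodule.eq_bot_iff]
    intro v hv
    have h2 := (hN _).1 h1 v hv
    have : (Pi.single j0 (g t) : J → K) = g t • Pi.single j0 1 := by
      rw [← Pi.single_smul]; simp
    rw [this, map_smul, hφ, hj0] at h2
    simpa [ht] using h2
  · intro σ j t
    obtain ⟨b, hb⟩ := hMU j
    have hPs : ∀ t, P (Pi.single t b) = M j (u t) := by
      intro t
      rw [hP, hb _ (hu t), Finset.sum_eq_single t]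
      · simp
      · intro s _ hs
        simp [Pi.single_eq_of_ne hs]
      · simp
    rw [← hPs, hρ, ← hPs]
    congr 1
    funext s
    rw [hS]
    by_cases h : s = σ t
    · subst h; simp
    · rw [Pi.single_eq_of_ne h, Pi.single_eq_of_ne]
      intro h'
      apply h
      rw [← h']; simp

end lin

open Matrix

/-- The action of `SL_n` on column vectors. -/
def mv {K : Type} [Field K] {n : ℕ} (A : Matrix.SpecialLinearGroup (Fin n) K) (v : Fin n → K) :
    Fin n → K := (A : Matrix (Fin n) (Fin n) K) *ᵥ v

lemma mv_mul {K : Type} [Field K] {n : ℕ} (A B : Matrix.SpecialLinearGroup (Fin n) K)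
    (v : Fin n → K) : mv (A * B) v = mv A (mv B v) := by
  unfold mv
  rw [Matrix.SpecialLinearGroup.coe_mul, Matrix.mulVec_mulVec]

lemma mv_one {K : Type} [Field K] {n : ℕ} (v : Fin n → K) :
    mv (1 : Matrix.SpecialLinearGroup (Fin n) K) v = v := by
  unfold mv
  rw [Matrix.SpecialLinearGroup.coe_one, Matrix.one_mulVec]

lemma act {K : Type} [Field K] {n r : ℕ} {τ : Type}
    (L : List ((Fin r × ℤ) × Matrix.SpecialLinearGroup (Fin n) K))
    (h : Fin r → Matrix.SpecialLinearGroup (Fin n) K) (σ : Fin r → Equiv.Perm τ)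
    (u : τ → (Fin n → K))
    (H : ∀ L', L' <:+ L → ∀ i t (e : ℤ),
      mv (h i ^ e) (mv (L'.map Prod.snd).prod (u t)) =
        mv (L'.map Prod.snd).prod (u ((σ i ^ e) t))) (t : τ) :
    mv (L.map (fun x => h x.1.1 ^ x.1.2 * x.2)).prod (u t) =
      mv (L.map Prod.snd).prod (u ((L.map (fun x => σ x.1.1 ^ x.1.2)).prod t)) := by
  induction L with
  | nil => simp [mv_one]
  | cons x L ih =>
    have ih' := ih (fun L' hL' => H L' (hL'.trans (List.suffix_cons x L)))
    have h1 := H (x :: L) List.suffix_rfl x.1.1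
      ((L.map (fun x => σ x.1.1 ^ x.1.2)).prod t) x.1.2
    rw [List.map_cons, List.prod_cons, List.map_cons, List.prod_cons, List.map_cons,
      List.prod_cons, Equiv.Perm.mul_apply]
    rw [List.map_cons, List.prod_cons] at h1
    rw [← h1]
    simp only [mv_mul]
    rw [ih']

theorem main {K : Type} [Field K] [Fintype K] {n r : ℕ}
    (C0 : Matrix.SpecialLinearGroup (Fin n) K)
    (L : List ((Fin r × ℤ) × Matrix.SpecialLinearGroup (Fin n) K))
    (hε : ∀ x ∈ L, x.1.2 = 1 ∨ x.1.2 = -1)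
    (hne : (L.map (fun x => (FreeGroup.of x.1.1) ^ x.1.2)).prod ≠ 1)
    (hid : ∀ h : Fin r → Matrix.SpecialLinearGroup (Fin n) K,
      C0 * (L.map (fun x : (Fin r × ℤ) × Matrix.SpecialLinearGroup (Fin n) K => h x.1.1 ^ x.1.2 * x.2)).prod ∈
        Subgroup.center (Matrix.SpecialLinearGroup (Fin n) K)) :
    n < (1 + (L.length + 1) + (L.length + 1) * (2 * (L.length + 1))) * 2 ^ (L.length + 2) := by
  classical
  by_contra! hn
  obtain ⟨α, _, _, hcard, σ, t0, ht0⟩ := exists_perm_list (L.map Prod.fst)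
    (by simpa using fun a b c hx => hε _ hx) (by rw [List.map_map]; exact hne)
  rw [List.length_map] at hcard
  rw [List.map_map] at ht0
  obtain ⟨u, ρ, hu, hρ⟩ := exists_rep (K := K) (V := Fin n → K) (J := Fin (L.length + 1))
    (fun j => Matrix.toLin' ((L.drop j).map Prod.snd).prod.1) (α ⊕ α) (Fin.last _)
    (by simp) (by
      rw [Fintype.card_fin, Fintype.card_sum, Module.finrank_fin_fun]
      refine le_trans ?_ hn
      gcongr
      omega)
  let θ : Equiv.Perm α →* Matrix.SpecialLinearGroup (Fin n) K :=
    { toFun := fun s => ⟨LinearMap.toMatrix' (ρ (Equiv.Perm.sumCongr s s)), by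
        rw [LinearMap.det_toMatrix']
        exact hom_sumCongr_eq_one ((LinearMap.det : Module.End K (Fin n → K) →* K).comp ρ) s⟩
      map_one' := by
        apply Subtype.ext
        simp
      map_mul' := by
        intro s s'
        apply Subtype.ext
        change LinearMap.toMatrix' (ρ (Equiv.Perm.sumCongr (s * s') (s * s'))) = LinearMap.toMatrix' _ * LinearMap.toMatrix' _
        rw [← Equiv.Perm.sumCongr_mul, map_mul, LinearMap.toMatrix'_mul] }
  let dbl : Equiv.Perm α →* Equiv.Perm (α ⊕ α) :=
    { toFun := fun s => Equiv.Perm.sumCongr s s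
      map_one' := by simp
      map_mul' := by intro s s'; rw [Equiv.Perm.sumCongr_mul] }
  have key : ∀ s : Fin r → Equiv.Perm α, ∀ t,
      mv (L.map (fun x => (θ (s x.1.1)) ^ x.1.2 * x.2)).prod (u t) =
      mv (L.map Prod.snd).prod
        (u ((L.map (fun x => (dbl (s x.1.1)) ^ x.1.2)).prod t)) := by
    intro s t
    apply act L (fun i => θ (s i)) (fun i => dbl (s i)) u
    intro L' hL' i t e
    rw [← map_zpow, ← map_zpow]
    have h1 := hρ (dbl (s i ^ e)) ⟨L.length - L'.length, by omega⟩ t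
    simp only [← List.suffix_iff_eq_drop.1 hL', Matrix.toLin'_apply] at h1
    change _ = _ *ᵥ _
    refine Eq.trans ?_ h1
    change LinearMap.toMatrix' (ρ (dbl (s i ^ e))) *ᵥ _ = _
    rw [LinearMap.toMatrix'_mulVec]
    rfl
  have hc1 := hid (fun _ => θ 1)
  have hc2 := hid (fun i => θ (σ i))
  have k1 := key (fun _ => 1) (Sum.inl t0)
  have k2 := key σ (Sum.inl t0)
  set A := (L.map (fun x => (θ (σ x.1.1)) ^ x.1.2 * x.2)).prod
  have hB : (L.map (fun x => (θ 1) ^ x.1.2 * x.2)).prod = (L.map Prod.snd).prod := by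
    simp
  rw [hB] at hc1
  set B := (L.map Prod.snd).prod
  have hz := Subgroup.mul_mem _ (Subgroup.inv_mem _ hc1) hc2
  have hz' : (C0 * B)⁻¹ * (C0 * A) = B⁻¹ * A := by group
  rw [hz', Matrix.SpecialLinearGroup.mem_center_iff] at hz
  obtain ⟨μ, -, hμ⟩ := hz
  have hw : (L.map (fun x => (dbl (σ x.1.1)) ^ x.1.2)).prod =
      dbl (L.map (fun x => (σ x.1.1) ^ x.1.2)).prod := by
    rw [map_list_prod, List.map_map]
    congr 1
    apply List.map_congr_left
    intro x _
    simp
  rw [hw] at k2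
  set w := (L.map (fun x => (σ x.1.1) ^ x.1.2)).prod
  have k3 : dbl w (Sum.inl t0) = Sum.inl (w t0) := rfl
  rw [k3] at k2
  have k4 : μ • u (Sum.inl t0) = u (Sum.inl (w t0)) := by
    have : mv (B⁻¹ * A) (u (Sum.inl t0)) = u (Sum.inl (w t0)) := by
      rw [mv_mul, k2, ← mv_mul, inv_mul_cancel, mv_one]
    rw [← this, mv, ← hμ]
    simp
  have hne' : (Sum.inl (w t0) : α ⊕ α) ≠ Sum.inl t0 := fun h => ht0 (Sum.inl_injective h)
  have h5 := hu.notMem_span_image (s := {Sum.inl t0}) (x := Sum.inl (w t0)) (by simpa using hne')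
  apply h5
  rw [← k4, Set.image_singleton]
  exact Submodule.smul_mem _ _ (Submodule.mem_span_singleton_self _)

lemma arith (l : ℕ) (hl : 1 ≤ l) :
    (1 + (l + 1) + (l + 1) * (2 * (l + 1))) * 2 ^ (l + 2) ≤ 2 ^ (7 * l) := by
  have h : 1 + (l + 1) + (l + 1) * (2 * (l + 1)) ≤ 2 ^ (4 * l) := by
    induction l, hl using Nat.le_induction with
    | base => norm_num
    | succ k hk ih =>
      have : 2 ^ (4 * (k + 1)) = 16 * 2 ^ (4 * k) := by ring
      rw [this]
      nlinarith
  calc _ ≤ 2 ^ (4 * l) * 2 ^ (l + 2) := Nat.mul_le_mul_right _ h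
    _ = 2 ^ (4 * l + (l + 2)) := by rw [← pow_add]
    _ ≤ _ := Nat.pow_le_pow_right (by norm_num) (by omega)

end MixedId


/-- Lower bound on the length of non-singular mixed identities for `PSL_n(q)`:
there is an absolute constant `C > 0` such that for all large `n` and every finite field,
any word with constants of length `l` in `PSL_n(q) ∗ F_r` with non-trivial content which
vanishes identically on `PSL_n(q)` satisfies `l ≥ C·log n / log log n`. -/
theorem length_nonsingular_mixed_identity_PSL :
    ∃ C : ℝ, 0 < C ∧ ∃ N : ℕ, ∀ (K : Type) [Field K] [Fintype K], ∀ n : ℕ, N ≤ n →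
      ∀ (r l : ℕ) (ι : Fin l → Fin r) (ε : Fin l → ℤ),
        (∀ j, ε j = 1 ∨ ε j = -1) →
        ∀ c : Fin (l + 1) →
          Matrix.SpecialLinearGroup (Fin n) K ⧸
            Subgroup.center (Matrix.SpecialLinearGroup (Fin n) K),
        -- non-singular: the content of the word is non-trivial
        (List.ofFn (fun j : Fin l => (FreeGroup.of (ι j)) ^ (ε j))).prod ≠ 1 →
        -- mixed identity: the word vanishes identically
        (∀ h : Fin r →
            Matrix.SpecialLinearGroup (Fin n) K ⧸
              Subgroup.center (Matrix.SpecialLinearGroup (Fin n) K),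
          c 0 * (List.ofFn (fun j : Fin l => (h (ι j)) ^ (ε j) * c j.succ)).prod = 1) →
        C * Real.log n / Real.log (Real.log n) ≤ l := by
  
  refine ⟨1 / 7, by norm_num, 27, ?_⟩
  intro K _ _ n hn r l ι ε hε c hne hid
  have hl : 1 ≤ l := by
    rcases Nat.eq_zero_or_pos l with h | h
    · subst h
      simp at hne
    · exact h
  choose C hC using fun j => QuotientGroup.mk_surjective (c j)
  have hlt : n < 2 ^ (7 * l) := by
    let L : List ((Fin r × ℤ) × Matrix.SpecialLinearGroup (Fin n) K) :=
      List.ofFn (fun j : Fin l => ((ι j, ε j), C j.succ))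
    have hL : L.length = l := by simp [L]
    have := MixedId.main (C 0) L
      (by
        intro x hx
        obtain ⟨j, rfl⟩ := List.mem_ofFn.1 hx
        exact hε j)
      (by
        simp only [L, List.map_ofFn]
        exact hne)
      (by
        intro h
        rw [← QuotientGroup.eq_one_iff, ← hid (fun i => (h i : _ ⧸ _))]
        rw [QuotientGroup.mk_mul, hC]
        congr 1
        change (QuotientGroup.mk' _) _ = _
        rw [map_list_prod]
        simp only [L, List.map_ofFn]
        congr 2
        funext j
        simp [hC])
    rw [hL] at this
    exact this.trans_le (MixedId.arith l hl)
  have hn0 : (27 : ℝ) ≤ n := by exact_mod_cast hn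
  have h1 : Real.log n ≤ 7 * l := by
    have h2 : (n : ℝ) ≤ 2 ^ (7 * l) := by exact_mod_cast hlt.le
    calc Real.log n ≤ Real.log (2 ^ (7 * l)) := Real.log_le_log (by linarith) h2
      _ = (7 * l : ℕ) * Real.log 2 := by rw [Real.log_pow]
      _ ≤ (7 * l : ℕ) * 1 := by
        gcongr
        linarith [Real.log_two_lt_d9]
      _ = 7 * l := by push_cast; ring
  have he := Real.exp_one_lt_d9
  have h3 : (1 : ℝ) ≤ Real.log 3 := by
    rw [Real.le_log_iff_exp_le (by norm_num)]
    linarith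
  have h4 : (3 : ℝ) ≤ Real.log n := by
    calc (3 : ℝ) ≤ 3 * Real.log 3 := by linarith
      _ = Real.log (3 ^ 3) := by rw [Real.log_pow]; norm_num
      _ ≤ Real.log n := Real.log_le_log (by norm_num) (by norm_num; linarith)
  have h5 : (1 : ℝ) ≤ Real.log (Real.log n) := by
    rw [Real.le_log_iff_exp_le (by linarith)]
    linarith
  calc 1 / 7 * Real.log n / Real.log (Real.log n) ≤ 1 / 7 * Real.log n :=
        div_le_self (by linarith) h5
    _ ≤ l := by linarith
end

section
/- Let V be a countably infinite dimensional vector space over F_q. Then GL_fin(V) := {g ∈ GL(V) : ‖g‖ < ∞}, where ‖g‖ is the projective rank seminorm, is a normal subgroup of GL(V), and every element g ∈ GL_fin(V) acts as a fixed scalar λ ∈ F_qˣ on some subspace W ≤ V of finite codimension. -/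
theorem GLaux_add {K V : Type*} [Field K] [AddCommGroup V] [Module K V] (f g : Module.End K V)
    (hf : Module.Finite K (LinearMap.range f)) (hg : Module.Finite K (LinearMap.range g)) :
    Module.Finite K (LinearMap.range (f + g)) := by
  have h : LinearMap.range (f + g) ≤ LinearMap.range f ⊔ LinearMap.range g := by
    rintro _ ⟨v, rfl⟩
    exact Submodule.add_mem_sup ⟨v, rfl⟩ ⟨v, rfl⟩
  exact Submodule.finiteDimensional_of_le h

theorem GLaux_mul_left {K V : Type*} [Field K] [AddCommGroup V] [Module K V]
    (f g : Module.End K V)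
    (hf : Module.Finite K (LinearMap.range f)) :
    Module.Finite K (LinearMap.range (g * f)) := by
  rw [Module.End.mul_eq_comp, LinearMap.range_comp]
  infer_instance

theorem GLaux_mul_right {K V : Type*} [Field K] [AddCommGroup V] [Module K V]
    (f g : Module.End K V)
    (hf : Module.Finite K (LinearMap.range f)) :
    Module.Finite K (LinearMap.range (f * g)) :=
  Submodule.finiteDimensional_of_le (LinearMap.range_comp_le_range g f)

/-- For a countably infinite dimensional vector space `V` over a finite field,
`GL_fin(V) = {g : ‖g‖ < ∞}` (finite projective rank) is a normal subgroup of `GL(V)`,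
and each of its elements acts as a fixed scalar on a subspace of finite codimension. -/
theorem GLfin_normal_subgroup {K V : Type*} [Field K] [Fintype K]
    [AddCommGroup V] [Module K V]
    (hdim : Module.rank K V = Cardinal.aleph0) :
    ∃ N : Subgroup (Module.End K V)ˣ,
      N.Normal ∧
      (∀ g : (Module.End K V)ˣ, g ∈ N ↔ ∃ μ : Kˣ,
        Module.Finite K
          ↥(LinearMap.range ((g : Module.End K V) - (μ : K) • (1 : Module.End K V)))) ∧
      ∀ g ∈ N, ∃ (μ : Kˣ) (W : Submodule K V), Module.Finite K (V ⧸ W) ∧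
        ∀ v ∈ W, (g : Module.End K V) v = (μ : K) • v := by
  refine ⟨{ carrier := {g | ∃ μ : Kˣ, Module.Finite K
                ↥(LinearMap.range ((g : Module.End K V) - (μ : K) • (1 : Module.End K V)))}
            one_mem' := ?_
            mul_mem' := ?_
            inv_mem' := ?_ }, ⟨?_⟩, fun g => Iff.rfl, ?_⟩
  · rintro g h ⟨μ, hμ⟩ ⟨ν, hν⟩
    refine ⟨μ * ν, ?_⟩
    have e : ((g * h : (Module.End K V)ˣ) : Module.End K V) - ((μ * ν : Kˣ) : K) • 1
        = ((g : Module.End K V) - (μ : K) • 1) * h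
          + ((μ : K) • (1 : Module.End K V)) * ((h : Module.End K V) - (ν : K) • 1) := by
      ext v
      simp [mul_smul, smul_sub]
    rw [e]
    exact GLaux_add _ _ (GLaux_mul_right _ _ hμ) (GLaux_mul_left _ _ hν)
  · refine ⟨1, ?_⟩
    have e : ((1 : (Module.End K V)ˣ) : Module.End K V) - ((1 : Kˣ) : K) • 1 = 0 := by simp
    rw [e, LinearMap.range_zero]
    infer_instance
  · rintro g ⟨μ, hμ⟩
    refine ⟨μ⁻¹, ?_⟩
    have e : ((g⁻¹ : (Module.End K V)ˣ) : Module.End K V) - ((μ⁻¹ : Kˣ) : K) • 1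
        = ((-(μ : K)⁻¹) • ((g⁻¹ : (Module.End K V)ˣ) : Module.End K V))
          * ((g : Module.End K V) - (μ : K) • 1) := by
      rw [smul_mul_assoc, mul_sub, Units.inv_mul, mul_smul_comm, mul_one, smul_sub, smul_smul]
      simp
      abel
    rw [e]
    exact GLaux_mul_left _ _ hμ
  · rintro g ⟨μ, hμ⟩ n
    refine ⟨μ, ?_⟩
    have e : ((n * g * n⁻¹ : (Module.End K V)ˣ) : Module.End K V) - (μ : K) • 1
        = (n : Module.End K V) * ((g : Module.End K V) - (μ : K) • 1)
          * ((n⁻¹ : (Module.End K V)ˣ) : Module.End K V) := by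
      rw [mul_sub, sub_mul, mul_smul_comm, mul_one, smul_mul_assoc, Units.mul_inv]
      simp
    rw [e]
    exact GLaux_mul_right _ _ (GLaux_mul_left _ _ hμ)
  · rintro g ⟨μ, hμ⟩
    refine ⟨μ, LinearMap.ker ((g : Module.End K V) - (μ : K) • (1 : Module.End K V)), ?_, ?_⟩
    · exact Module.Finite.equiv (LinearMap.quotKerEquivRange _).symm
    · intro v hv
      simpa [sub_eq_zero] using hv
end

section
/- Let V be a countably infinite dimensional vector space over a finite field F_q, let k ≥ 3, and let H ≤ GL(V) be linearly k-transitive. Suppose H contains a non-scalar element c of projective rank 0 < ‖c‖ < k/2. Then the normal closure of c in H is contained in H ∩ GL_fin(V), is locally finite, and is linearly (⌈k/2⌉ − 1)-transitive. -/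
namespace SmallElt
open Module

section GLW
variable {K W : Type*} [Field K] [AddCommGroup W] [Module K W]

/-- `P` contains the transvection `x ↦ x + φ x • a`. -/
def HasT (P : Subgroup (W ≃ₗ[K] W)) (φ : W →ₗ[K] K) (a : W) : Prop :=
  ∃ p ∈ P, ∀ x, p x = x + φ x • a

theorem HasT.conj {P : Subgroup (W ≃ₗ[K] W)} (hP : P.Normal) {φ φ' : W →ₗ[K] K} {a : W}
    (h : HasT P φ a) (e : W ≃ₗ[K] W) (he : ∀ x, φ' (e x) = φ x) : HasT P φ' (e a) := by
  obtain ⟨p, hp, hpx⟩ := h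
  refine ⟨e * p * e⁻¹, hP.conj_mem p hp e, fun x => ?_⟩
  obtain ⟨y, rfl⟩ := e.surjective x
  have : (e⁻¹ : W ≃ₗ[K] W) (e y) = y := e.symm_apply_apply y
  simp [LinearEquiv.mul_apply, this, hpx, he]

theorem HasT.add {P : Subgroup (W ≃ₗ[K] W)} {φ : W →ₗ[K] K} {a b : W}
    (ha : HasT P φ a) (hb : HasT P φ b) (h : φ b = 0) : HasT P φ (a + b) := by
  obtain ⟨p, hp, hpx⟩ := ha
  obtain ⟨q, hq, hqx⟩ := hb
  refine ⟨p * q, P.mul_mem hp hq, fun x => ?_⟩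
  rw [LinearEquiv.mul_apply, hqx, hpx]
  simp [h]
  abel

theorem exists_common [FiniteDimensional K W] (h3 : 3 ≤ finrank K W) (φ ψ : W →ₗ[K] K) :
    ∃ a, a ≠ 0 ∧ φ a = 0 ∧ ψ a = 0 := by
  by_contra! hcon
  have hinj : Function.Injective (φ.prod ψ) := by
    rw [← LinearMap.ker_eq_bot, LinearMap.ker_eq_bot']
    intro m hm
    by_contra hne
    simp only [LinearMap.prod_apply, Function.prod, Prod.mk_eq_zero] at hm
    exact hcon m hne hm.1 hm.2
  have := LinearMap.finrank_le_finrank_of_injective hinj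
  simp at this
  omega

theorem exists_functional {U : Submodule K W} {a : W} (h : a ∉ U) :
    ∃ f : W →ₗ[K] K, f a = 1 ∧ ∀ x ∈ U, f x = 0 := by
  obtain ⟨f, hf, hU⟩ := Submodule.exists_le_ker_of_notMem h
  refine ⟨(f a)⁻¹ • f, by simp [hf], fun x hx => ?_⟩
  have := hU hx
  simp only [LinearMap.mem_ker] at this
  simp [this]

theorem HasT.step1 [FiniteDimensional K W] (h3 : 3 ≤ finrank K W)
    {P : Subgroup (W ≃ₗ[K] W)} (hP : P.Normal) {φ : W →ₗ[K] K} {a b : W}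
    (h : HasT P φ a) (ha0 : a ≠ 0) (ha : φ a = 0) (hb : φ b = 0) : HasT P φ b := by
  have key : ∀ b, φ b = 0 → b ∉ Submodule.span K {a} → HasT P φ b := by
    intro b hb hba
    have hn : a ∉ Submodule.span K {b - a} := by
      intro hmem
      obtain ⟨l, hl⟩ := Submodule.mem_span_singleton.1 hmem
      have hl0 : l ≠ 0 := by
        rintro rfl
        simp at hl
        exact ha0 hl.symm
      apply hba
      refine Submodule.mem_span_singleton.2 ⟨1 + l⁻¹, ?_⟩
      have : l⁻¹ • a = b - a := by
        rw [← hl, smul_smul, inv_mul_cancel₀ hl0, one_smul, hl]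
      rw [add_smul, this]
      simp
    obtain ⟨f, hfa, hf⟩ := exists_functional hn
    have hf' := hf _ (Submodule.mem_span_singleton_self _)
    have := h.conj hP (φ' := φ) (LinearEquiv.transvection hf') (by
      intro x
      simp [LinearMap.transvection.apply, ha, hb])
    simpa [LinearMap.transvection.apply, hfa] using this
  by_cases hba : b ∈ Submodule.span K {a}
  · obtain ⟨θ, hθ, -⟩ := exists_functional (U := (⊥ : Submodule K W)) (a := a) (by simpa using ha0)
    obtain ⟨d, hd0, hd1, hd2⟩ := exists_common h3 φ θ
    have hda : d ∉ Submodule.span K {a} := by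
      intro hmem
      obtain ⟨l, rfl⟩ := Submodule.mem_span_singleton.1 hmem
      simp [hθ] at hd2
      simp [hd2] at hd0
    have h1 := key d hd1 hda
    have h2 := key (b - d) (by simp [hb, hd1]) (fun hmem => hda (by
      simpa using Submodule.sub_mem _ hba hmem))
    simpa using h2.add h1 hd1
  · exact key b hb hba

theorem HasT.step2 [FiniteDimensional K W] (h3 : 3 ≤ finrank K W)
    {P : Subgroup (W ≃ₗ[K] W)} (hP : P.Normal) {φ : W →ₗ[K] K} {a : W}
    (h : HasT P φ a) (ha0 : a ≠ 0) (ha : φ a = 0) (hφ : φ ≠ 0)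
    (ψ : W →ₗ[K] K) (b : W) (hb : ψ b = 0) : HasT P ψ b := by
  have hall : ∀ b, φ b = 0 → HasT P φ b := fun b hb => h.step1 h3 hP ha0 ha hb
  by_cases hprop : ∃ l : K, ψ = l • φ
  · obtain ⟨l, rfl⟩ := hprop
    by_cases hl : l = 0
    · exact ⟨1, P.one_mem, by simp [hl]⟩
    · have hb' : φ b = 0 := by simpa [hl] using hb
      obtain ⟨p, hp, hpx⟩ := hall (l • b) (by simp [hb'])
      refine ⟨p, hp, fun x => ?_⟩
      rw [hpx]
      simp [smul_smul, mul_comm]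
  · have hd : ∃ d, (ψ - φ) d = 0 ∧ φ d = 1 := by
      by_contra! hcon
      apply hprop
      have hcon' : ∀ d, (ψ - φ) d = 0 → φ d = 0 := by
        intro d hd
        by_contra hne
        exact hcon ((φ d)⁻¹ • d) (by rw [map_smul, hd, smul_zero]) (by simp [hne])
      by_cases hz : ∃ z, (ψ - φ) z ≠ 0
      · obtain ⟨z, hz⟩ := hz
        obtain ⟨z, hz⟩ : ∃ z, (ψ - φ) z = 1 :=
          ⟨((ψ - φ) z)⁻¹ • z, by rw [map_smul, smul_eq_mul, inv_mul_cancel₀ hz]⟩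
        have hx : ∀ x, φ x = (ψ - φ) x * φ z := by
          intro x
          have := hcon' (x - (ψ - φ) x • z) (by rw [map_sub, map_smul, hz]; simp)
          rw [map_sub, map_smul, sub_eq_zero] at this
          exact this
        have hφz : φ z ≠ 0 := by
          intro h0
          apply hφ
          ext x
          rw [hx, h0]
          simp
        refine ⟨1 + (φ z)⁻¹, ?_⟩
        ext x
        have := hx x
        simp only [LinearMap.sub_apply, LinearMap.smul_apply, smul_eq_mul] at this ⊢
        have h2 : ψ x - φ x = φ x * (φ z)⁻¹ := by
          rw [eq_mul_inv_iff_mul_eq₀ hφz]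
          exact this.symm
        linear_combination h2
      · push Not at hz
        refine ⟨1, ?_⟩
        ext x
        have := hz x
        simp only [LinearMap.sub_apply, sub_eq_zero] at this
        simp [this]
    obtain ⟨d, hd1, hd2⟩ := hd
    obtain ⟨a', ha'0, ha'1, ha'2⟩ := exists_common h3 φ ψ
    have hd1' : (φ - ψ) d = 0 := by
      simp only [LinearMap.sub_apply, sub_eq_zero] at hd1 ⊢
      exact hd1.symm
    have hψd : ψ d = 1 := by
      simp only [LinearMap.sub_apply, sub_eq_zero] at hd1
      rw [hd1, hd2]
    have := (hall a' ha'1).conj hP (φ' := ψ) (LinearEquiv.transvection hd1') (by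
      intro x
      simp [LinearMap.transvection.apply, hψd])
    have h5 : HasT P ψ a' := by
      simpa [LinearMap.transvection.apply, ha'1, ha'2] using this
    exact h5.step1 h3 hP ha'0 ha'2 hb

theorem exists_hasT [FiniteDimensional K W] (h3 : 3 ≤ finrank K W)
    {P : Subgroup (W ≃ₗ[K] W)} (hP : P.Normal) {g : W ≃ₗ[K] W} (hg : g ∈ P) {v : W}
    (hv : LinearIndependent K ![v, g v]) :
    ∃ (φ : W →ₗ[K] K) (a : W), φ ≠ 0 ∧ a ≠ 0 ∧ φ a = 0 ∧ HasT P φ a := by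
  have hlt : Submodule.span K (Set.range ![v, g v]) < ⊤ := by
    rw [lt_top_iff_ne_top]
    intro htop
    have := finrank_range_le_card (R := K) ![v, g v]
    rw [Set.finrank, htop, finrank_top] at this
    simp at this
    omega
  obtain ⟨ψ, hψ0, hψ⟩ := Submodule.exists_le_ker_of_lt_top _ hlt
  have hψv : ψ v = 0 := hψ (Submodule.subset_span ⟨0, rfl⟩)
  have hψg : ψ (g v) = 0 := hψ (Submodule.subset_span ⟨1, rfl⟩)
  obtain ⟨x₀, hx₀⟩ : ∃ x, ψ x = 1 := by
    obtain ⟨x, hx⟩ := DFunLike.ne_iff.1 hψ0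
    exact ⟨(ψ x)⁻¹ • x, by rw [map_smul, smul_eq_mul, inv_mul_cancel₀ hx]⟩
  set t : W ≃ₗ[K] W := LinearEquiv.transvection hψv with ht
  have htx : ∀ x, t x = x + ψ x • v := fun x => rfl
  set s : W ≃ₗ[K] W := g * (t * g⁻¹ * t⁻¹) with hs
  have hsP : s ∈ P := P.mul_mem hg (hP.conj_mem _ (P.inv_mem hg) t)
  have hst : ∀ x, s (t (g x)) = g (t x) := by
    intro x
    have h1 : (t⁻¹ : W ≃ₗ[K] W) (t (g x)) = g x := t.symm_apply_apply _
    have h2 : (g⁻¹ : W ≃ₗ[K] W) (g x) = x := g.symm_apply_apply _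
    simp only [hs, LinearEquiv.mul_apply, h1, h2]
  have hψs : ∀ y, ψ (s y) = ψ y := by
    intro y
    obtain ⟨y, rfl⟩ := t.surjective y
    obtain ⟨x, rfl⟩ := g.surjective y
    rw [hst, htx, htx]
    simp [hψv, hψg]
  have hsne : ∃ y, s y ≠ y := by
    refine ⟨t (g x₀), fun h => ?_⟩
    rw [hst, htx, htx, hx₀, map_add, one_smul, add_right_inj] at h
    have := (LinearIndependent.pair_iff.1 hv) (ψ (g x₀)) (-1) (by rw [h]; simp)
    simpa using this.2
  by_cases hcase : ∃ a, ψ a = 0 ∧ s a ≠ a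
  · obtain ⟨a, ha, hsa⟩ := hcase
    refine ⟨ψ, s a - a, hψ0, sub_ne_zero.2 hsa, by simp [hψs], ?_⟩
    set τ : W ≃ₗ[K] W := LinearEquiv.transvection ha
    have hτ : ∀ x, τ x = x + ψ x • a := fun x => rfl
    refine ⟨s * (τ * s⁻¹ * τ⁻¹), P.mul_mem hsP (hP.conj_mem _ (P.inv_mem hsP) τ), fun y => ?_⟩
    obtain ⟨y, rfl⟩ := τ.surjective y
    obtain ⟨x, rfl⟩ := s.surjective y
    have h1 : (τ⁻¹ : W ≃ₗ[K] W) (τ (s x)) = s x := τ.symm_apply_apply _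
    have h2 : (s⁻¹ : W ≃ₗ[K] W) (s x) = x := s.symm_apply_apply _
    simp only [LinearEquiv.mul_apply, h1, h2]
    simp only [hτ, map_add, map_smul, hψs, ha, smul_sub]
    simp
  · push Not at hcase
    have hsx : ∀ x, s x = x + ψ x • (s x₀ - x₀) := by
      intro x
      have := hcase (x - ψ x • x₀) (by simp [hx₀])
      rw [map_sub, map_smul, sub_eq_iff_eq_add] at this
      rw [this, smul_sub]
      abel
    refine ⟨ψ, s x₀ - x₀, hψ0, ?_, by simp [hψs], s, hsP, hsx⟩
    intro h0
    obtain ⟨y, hy⟩ := hsne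
    apply hy
    rw [hsx, h0]
    simp

theorem move_one {P : Subgroup (W ≃ₗ[K] W)}
    (hall : ∀ (φ : W →ₗ[K] K) (a : W), φ a = 0 → HasT P φ a)
    {U : Submodule K W} {a b : W} (ha : a ∉ U) (hb : b ∉ U ⊔ Submodule.span K {a}) :
    ∃ p ∈ P, (∀ x ∈ U, p x = x) ∧ p a = b := by
  have hn : a ∉ U ⊔ Submodule.span K {b - a} := by
    intro hmem
    obtain ⟨u, hu, z, hz, huz⟩ := Submodule.mem_sup.1 hmem
    obtain ⟨l, rfl⟩ := Submodule.mem_span_singleton.1 hz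
    by_cases hl : l = 0
    · subst hl
      simp at huz
      exact ha (huz ▸ hu)
    · apply hb
      refine Submodule.mem_sup.2 ⟨-(l⁻¹ • u), U.neg_mem (U.smul_mem _ hu), (1 + l⁻¹) • a,
        Submodule.smul_mem _ _ (Submodule.mem_span_singleton_self a), ?_⟩
      have h1 : l⁻¹ • a = l⁻¹ • u + (b - a) := by
        conv_lhs => rw [← huz]
        rw [smul_add, smul_smul, inv_mul_cancel₀ hl, one_smul]
      rw [add_smul, h1, one_smul]
      abel
  obtain ⟨f, hfa, hf⟩ := exists_functional hn
  have hf' := hf _ (Submodule.mem_sup_right (Submodule.mem_span_singleton_self _))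
  obtain ⟨p, hp, hpx⟩ := hall f (b - a) hf'
  refine ⟨p, hp, fun x hx => ?_, ?_⟩
  · rw [hpx, hf x (Submodule.mem_sup_left hx)]
    simp
  · rw [hpx, hfa]
    simp

theorem move_two [FiniteDimensional K W] {P : Subgroup (W ≃ₗ[K] W)}
    (hall : ∀ (φ : W →ₗ[K] K) (a : W), φ a = 0 → HasT P φ a)
    {U : Submodule K W} (hU : finrank K U + 1 < finrank K W) {a b : W} (ha : a ∉ U) (hb : b ∉ U) :
    ∃ p ∈ P, (∀ x ∈ U, p x = x) ∧ p a = b := by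
  have hproper : ∀ a : W, ∃ x, x ∉ U ⊔ Submodule.span K {a} := by
    intro a
    by_contra! hcon
    have htop : U ⊔ Submodule.span K {a} = ⊤ := by
      rw [eq_top_iff]
      exact fun x _ => hcon x
    have h1 := Submodule.finrank_add_le_finrank_add_finrank U (Submodule.span K {a})
    have h2 := finrank_span_le_card (R := K) ({a} : Set W)
    rw [htop, finrank_top] at h1
    simp at h2
    omega
  obtain ⟨x, hx⟩ := hproper a
  obtain ⟨y, hy⟩ := hproper b
  obtain ⟨c, hca, hcb⟩ : ∃ c, c ∉ U ⊔ Submodule.span K {a} ∧ c ∉ U ⊔ Submodule.span K {b} := by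
    by_cases hxb : x ∈ U ⊔ Submodule.span K {b}
    · by_cases hya : y ∈ U ⊔ Submodule.span K {a}
      · refine ⟨x + y, fun h => hx ?_, fun h => hy ?_⟩
        · simpa using Submodule.sub_mem _ h hya
        · simpa using Submodule.sub_mem _ h hxb
      · exact ⟨y, hya, hy⟩
    · exact ⟨x, hx, hxb⟩
  obtain ⟨p, hp, hpU, hpa⟩ := move_one hall ha hca
  obtain ⟨q, hq, hqU, hqb⟩ := move_one hall hb hcb
  have hqi : ∀ x, (q⁻¹ : W ≃ₗ[K] W) (q x) = x := q.symm_apply_apply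
  refine ⟨q⁻¹ * p, P.mul_mem (P.inv_mem hq) hp, fun x hx => ?_, ?_⟩
  · rw [LinearEquiv.mul_apply, hpU x hx]
    conv_lhs => rw [← hqU x hx]
    exact hqi x
  · rw [LinearEquiv.mul_apply, hpa, ← hqb, hqi]

theorem tuple_transitive [FiniteDimensional K W] {P : Subgroup (W ≃ₗ[K] W)}
    (hall : ∀ (φ : W →ₗ[K] K) (a : W), φ a = 0 → HasT P φ a) :
    ∀ (n : ℕ), n < finrank K W → ∀ u w : Fin n → W, LinearIndependent K u →
      LinearIndependent K w → ∃ p ∈ P, ∀ i, p (u i) = w i := by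
  intro n
  induction n with
  | zero => exact fun _ u w _ _ => ⟨1, P.one_mem, fun i => i.elim0⟩
  | succ n ih =>
    intro hn u w hu hw
    obtain ⟨p, hp, hpu⟩ := ih (by omega) (u ∘ Fin.castSucc) (w ∘ Fin.castSucc)
      (hu.comp _ (Fin.castSucc_injective n)) (hw.comp _ (Fin.castSucc_injective n))
    have hpu' : LinearIndependent K (fun i => p (u i)) := hu.map' p.toLinearMap p.ker
    have hlast : ∀ z : Fin (n + 1) → W, LinearIndependent K z →
        z (Fin.last n) ∉ Submodule.span K (Set.range (z ∘ Fin.castSucc)) := by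
      intro z hz
      have := hz.notMem_span_image (s := Set.range Fin.castSucc) (x := Fin.last n) (by
        rintro ⟨i, hi⟩
        exact (Fin.castSucc_lt_last i).ne hi)
      rwa [← Set.range_comp] at this
    have h1 := hlast _ hpu'
    have h2 := hlast _ hw
    have heq : ((fun i => p (u i)) ∘ Fin.castSucc) = w ∘ Fin.castSucc := funext hpu
    rw [heq] at h1
    have hfr := finrank_range_le_card (R := K) (w ∘ Fin.castSucc)
    rw [Set.finrank, Fintype.card_fin] at hfr
    obtain ⟨q, hq, hqU, hqa⟩ := move_two hall (by omega) h1 h2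
    refine ⟨q * p, P.mul_mem hq hp, fun i => ?_⟩
    rw [LinearEquiv.mul_apply]
    refine Fin.lastCases hqa (fun j => ?_) i
    have := hpu j
    simp only [Function.comp] at this
    rw [this]
    exact hqU _ (Submodule.subset_span ⟨j, rfl⟩)

theorem normal_transitive [FiniteDimensional K W] (h3 : 3 ≤ finrank K W)
    {P : Subgroup (W ≃ₗ[K] W)} (hP : P.Normal) {g : W ≃ₗ[K] W} (hg : g ∈ P) {v : W}
    (hv : LinearIndependent K ![v, g v]) (n : ℕ) (hn : n < finrank K W) (u w : Fin n → W)
    (hu : LinearIndependent K u) (hw : LinearIndependent K w) : ∃ p ∈ P, ∀ i, p (u i) = w i := by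
  obtain ⟨φ, a, hφ, ha0, ha, h⟩ := exists_hasT h3 hP hg hv
  exact tuple_transitive (fun ψ b hb => h.step2 h3 hP ha0 ha hφ ψ b hb) n hn u w hu hw

end GLW

section GLV
variable {K V : Type*} [Field K] [AddCommGroup V] [Module K V]

theorem exists_extend_dim (hinf : ¬ Module.Finite K V) (S : Submodule K V) [Module.Finite K S]
    (k : ℕ) (hk : finrank K S ≤ k) :
    ∃ W : Submodule K V, S ≤ W ∧ Module.Finite K W ∧ finrank K W = k := by
  induction k, hk using Nat.le_induction with
  | base => exact ⟨S, le_rfl, inferInstance, rfl⟩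
  | succ k hk ih =>
    obtain ⟨W, hSW, hW, hWk⟩ := ih
    obtain ⟨v, hv⟩ : ∃ v, v ∉ W := by
      by_contra! hcon
      apply hinf
      have htop : W = ⊤ := by
        rw [eq_top_iff]
        exact fun x _ => hcon x
      subst htop
      exact Module.Finite.equiv Submodule.topEquiv
    have hlt : W < W ⊔ Submodule.span K {v} := by
      refine lt_of_le_of_ne le_sup_left fun h => hv ?_
      rw [h]
      exact Submodule.mem_sup_right (Submodule.mem_span_singleton_self v)
    refine ⟨W ⊔ Submodule.span K {v}, hSW.trans le_sup_left, inferInstance, ?_⟩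
    have h0 := Submodule.finrank_lt_finrank_of_lt hlt
    have h1 := Submodule.finrank_add_le_finrank_add_finrank W (Submodule.span K {v})
    have h2 := finrank_span_le_card (R := K) ({v} : Set V)
    simp at h2
    omega

theorem inv_apply_eq (g : (Module.End K V)ˣ) (x : V) :
    ((g⁻¹ : (Module.End K V)ˣ) : Module.End K V) ((g : Module.End K V) x) = x := by
  rw [← Module.End.mul_apply, Units.inv_mul, Module.End.one_apply]

theorem apply_inv_eq (g : (Module.End K V)ˣ) (x : V) :
    (g : Module.End K V) (((g⁻¹ : (Module.End K V)ˣ) : Module.End K V) x) = x := by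
  rw [← Module.End.mul_apply, Units.mul_inv, Module.End.one_apply]

/-- Elements of finite projective rank. -/
def glFin (K V : Type*) [Field K] [AddCommGroup V] [Module K V] :
    Subgroup (Module.End K V)ˣ where
  carrier := {g | ∃ μ : Kˣ, Module.Finite K
    ↥(LinearMap.range ((g : Module.End K V) - (μ : K) • (1 : Module.End K V)))}
  one_mem' := by
    refine ⟨1, ?_⟩
    have : ((1 : (Module.End K V)ˣ) : Module.End K V) - ((1 : Kˣ) : K) • (1 : Module.End K V) = 0 := by
      simp
    rw [this, LinearMap.range_zero]
    infer_instance
  mul_mem' := by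
    rintro g h ⟨μ, hμ⟩ ⟨ν, hν⟩
    refine ⟨μ * ν, ?_⟩
    have hle : LinearMap.range (((g * h : (Module.End K V)ˣ) : Module.End K V) -
        ((μ * ν : Kˣ) : K) • (1 : Module.End K V)) ≤
        (LinearMap.range ((h : Module.End K V) - (ν : K) • (1 : Module.End K V))).map
          (g : Module.End K V) ⊔
        LinearMap.range ((g : Module.End K V) - (μ : K) • (1 : Module.End K V)) := by
      rintro _ ⟨x, rfl⟩
      refine Submodule.mem_sup.2 ⟨_, Submodule.mem_map_of_mem ⟨x, rfl⟩, _, ⟨(ν : K) • x, rfl⟩, ?_⟩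
      simp [mul_smul, smul_sub, smul_comm (ν : K) (μ : K) x]
    exact Submodule.finiteDimensional_of_le hle
  inv_mem' := by
    rintro g ⟨μ, hμ⟩
    refine ⟨μ⁻¹, ?_⟩
    have hle : LinearMap.range (((g⁻¹ : (Module.End K V)ˣ) : Module.End K V) -
        ((μ⁻¹ : Kˣ) : K) • (1 : Module.End K V)) ≤
        (LinearMap.range ((g : Module.End K V) - (μ : K) • (1 : Module.End K V))).map
          ((g⁻¹ : (Module.End K V)ˣ) : Module.End K V) := by
      rintro _ ⟨x, rfl⟩
      refine ⟨_, ⟨-((μ⁻¹ : Kˣ) : K) • x, rfl⟩, ?_⟩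
      simp only [LinearMap.sub_apply, map_sub, LinearMap.smul_apply, Module.End.one_apply, map_smul,
        inv_apply_eq, smul_sub, smul_smul]
      simp
      abel
    exact Submodule.finiteDimensional_of_le hle

theorem glFin_normal : (glFin K V).Normal := by
  constructor
  rintro g ⟨μ, hμ⟩ h
  refine ⟨μ, ?_⟩
  have hle : LinearMap.range (((h * g * h⁻¹ : (Module.End K V)ˣ) : Module.End K V) -
      (μ : K) • (1 : Module.End K V)) ≤
      (LinearMap.range ((g : Module.End K V) - (μ : K) • (1 : Module.End K V))).map
        (h : Module.End K V) := by
    rintro _ ⟨x, rfl⟩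
    refine ⟨_, ⟨((h⁻¹ : (Module.End K V)ˣ) : Module.End K V) x, rfl⟩, ?_⟩
    simp only [LinearMap.sub_apply, map_sub, LinearMap.smul_apply, Module.End.one_apply, map_smul,
      apply_inv_eq, Units.val_mul, Module.End.mul_apply]
  exact Submodule.finiteDimensional_of_le hle

/-- Elements preserving `W` and acting as a scalar on `U`. -/
def blockGroup (W U : Submodule K V) : Subgroup (Module.End K V)ˣ where
  carrier := {g | (∃ μ : Kˣ, ∀ u ∈ U, (g : Module.End K V) u = (μ : K) • u) ∧
    ∀ x, (g : Module.End K V) x ∈ W ↔ x ∈ W}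
  one_mem' := ⟨⟨1, by simp⟩, by simp⟩
  mul_mem' := by
    rintro g h ⟨⟨μ, hμ⟩, hg⟩ ⟨⟨ν, hν⟩, hh⟩
    refine ⟨⟨μ * ν, fun u hu => ?_⟩, fun x => ?_⟩
    · simp [hν u hu, hμ u hu, smul_smul, mul_comm]
    · rw [Units.val_mul, Module.End.mul_apply, hg, hh]
  inv_mem' := by
    rintro g ⟨⟨μ, hμ⟩, hg⟩
    refine ⟨⟨μ⁻¹, fun u hu => ?_⟩, fun x => ?_⟩
    · have := congrArg ((g⁻¹ : (Module.End K V)ˣ) : Module.End K V) (hμ u hu)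
      rw [inv_apply_eq, map_smul] at this
      conv_rhs => rw [this]
      simp [smul_smul]
    · rw [← hg, apply_inv_eq]

theorem blockGroup_finite [Fintype K] (W U : Submodule K V) [Module.Finite K W] (h : W ⊔ U = ⊤) :
    Finite (blockGroup W U) := by
  have : Finite W := Module.finite_of_finite K
  have hch : ∀ g : blockGroup W U, ∃ μ : Kˣ, ∀ u ∈ U,
      ((g : (Module.End K V)ˣ) : Module.End K V) u = (μ : K) • u := fun g => g.2.1
  choose m hm using hch
  let F : blockGroup W U → Kˣ × (W → W) := fun g =>
    (m g, fun x => ⟨((g : (Module.End K V)ˣ) : Module.End K V) x, (g.2.2 _).2 x.2⟩)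
  refine Finite.of_injective F fun g g' hgg => ?_
  have h1 : m g = m g' := congrArg Prod.fst hgg
  have h2 := congrArg Prod.snd hgg
  apply Subtype.ext
  apply Units.ext
  apply LinearMap.ext
  intro x
  have hx : x ∈ W ⊔ U := h ▸ Submodule.mem_top
  obtain ⟨y, hy, z, hz, rfl⟩ := Submodule.mem_sup.1 hx
  have h3 := congrArg Subtype.val (congrFun h2 ⟨y, hy⟩)
  have h3' : ((g : (Module.End K V)ˣ) : Module.End K V) y =
    ((g' : (Module.End K V)ˣ) : Module.End K V) y := h3
  rw [map_add, map_add, hm g z hz, hm g' z hz, h1, h3']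

theorem closure_finite [Fintype K] (H : Subgroup (Module.End K V)ˣ) (s : Finset H)
    (hs : ∀ x ∈ s, (x : (Module.End K V)ˣ) ∈ glFin K V) :
    Finite (Subgroup.closure (↑s : Set H)) := by
  have hch : ∀ x : s, ∃ μ : Kˣ, Module.Finite K ↥(LinearMap.range
      ((((x : H) : (Module.End K V)ˣ) : Module.End K V) - (μ : K) • (1 : Module.End K V))) := fun x => hs x x.2
  choose m hm using hch
  let f : s → Module.End K V := fun x =>
    (((x : H) : (Module.End K V)ˣ) : Module.End K V) - (m x : K) • (1 : Module.End K V)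
  have hf : ∀ x, Module.Finite K (LinearMap.range (f x)) := hm
  let Φ : V →ₗ[K] ((x : s) → LinearMap.range (f x)) := LinearMap.pi fun x => (f x).rangeRestrict
  let U := LinearMap.ker Φ
  obtain ⟨C, hC⟩ := Submodule.exists_isCompl U
  have hCfin : Module.Finite K C := Module.Finite.equiv
    (Φ.quotKerEquivRange.symm.trans (Submodule.quotientEquivOfIsCompl U C hC))
  let W := (⨆ x, LinearMap.range (f x)) ⊔ C
  have hWU : W ⊔ U = ⊤ := by
    rw [eq_top_iff, ← hC.sup_eq_top]
    exact sup_le le_sup_right (le_sup_right.trans le_sup_left)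
  have hfin := blockGroup_finite W U hWU
  have hle : Subgroup.closure (↑s : Set H) ≤ (blockGroup W U).subgroupOf H := by
    rw [Subgroup.closure_le]
    intro x hx
    rw [SetLike.mem_coe, Subgroup.mem_subgroupOf]
    have hval : ∀ v, ((x : (Module.End K V)ˣ) : Module.End K V) v =
        f ⟨x, hx⟩ v + (m ⟨x, hx⟩ : K) • v := by
      intro v
      simp [f]
    refine ⟨⟨m ⟨x, hx⟩, fun u hu => ?_⟩, fun v => ?_⟩
    · have h0 : Φ u = 0 := hu
      have h1 := congrArg Subtype.val (congrFun h0 ⟨x, hx⟩)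
      have h2 : f ⟨x, hx⟩ u = 0 := h1
      rw [hval, h2, zero_add]
    · have h1 : f ⟨x, hx⟩ v ∈ W :=
        (le_sup_left : _ ≤ W) (Submodule.mem_iSup_of_mem ⟨x, hx⟩ ⟨v, rfl⟩)
      rw [hval, W.add_mem_iff_right h1]
      exact W.smul_mem_iff (m ⟨x, hx⟩).ne_zero
  let G : Subgroup.closure (↑s : Set H) → blockGroup W U := fun x => ⟨x.1.1, hle x.2⟩
  refine Finite.of_injective G fun x y hxy => ?_
  apply Subtype.ext
  apply Subtype.ext
  have h1 : (G x : (Module.End K V)ˣ) = G y := congrArg _ hxy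
  exact h1

theorem lift_equiv {k : ℕ} (H : Subgroup (Module.End K V)ˣ)
    (htrans : ∀ u w : Fin k → V, LinearIndependent K u → LinearIndependent K w →
      ∃ h ∈ H, ∀ i, (h : Module.End K V) (u i) = w i)
    (W W' : Submodule K V) [Module.Finite K W] (hW : finrank K W = k) (e : W ≃ₗ[K] W') :
    ∃ h : H, ∀ x : W, ((h : (Module.End K V)ˣ) : Module.End K V) x = e x := by
  let b := finBasisOfFinrankEq K W hW
  obtain ⟨h, hH, hh⟩ := htrans (fun i => (b i : V)) (fun i => (e (b i) : V))
    (b.linearIndependent.map' W.subtype W.ker_subtype)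
    (by
      have := (b.map e).linearIndependent.map' W'.subtype W'.ker_subtype
      simpa [Function.comp_def] using this)
  refine ⟨⟨h, hH⟩, fun x => ?_⟩
  have : (h : Module.End K V) ∘ₗ W.subtype = W'.subtype ∘ₗ e.toLinearMap := b.ext fun i => by
    simpa using hh i
  exact LinearMap.congr_fun this x

/-- Automorphisms of `W` induced by elements of `N`. -/
def induced {H : Subgroup (Module.End K V)ˣ} (N : Subgroup H) (W : Submodule K V) :
    Subgroup (W ≃ₗ[K] W) where
  carrier := {p | ∃ n ∈ N, ∀ x : W, ((n : (Module.End K V)ˣ) : Module.End K V) x = p x}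
  one_mem' := ⟨1, N.one_mem, by simp⟩
  mul_mem' := by
    rintro p q ⟨n, hn, hp⟩ ⟨n', hn', hq⟩
    refine ⟨n * n', N.mul_mem hn hn', fun x => ?_⟩
    rw [Subgroup.coe_mul, Units.val_mul, Module.End.mul_apply, hq, hp, LinearEquiv.mul_apply]
  inv_mem' := by
    rintro p ⟨n, hn, hp⟩
    refine ⟨n⁻¹, N.inv_mem hn, fun x => ?_⟩
    obtain ⟨y, rfl⟩ := p.surjective x
    have h1 : (p⁻¹ : W ≃ₗ[K] W) (p y) = y := p.symm_apply_apply y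
    rw [h1, ← hp, Subgroup.coe_inv, inv_apply_eq]

theorem transitive_part (hinf : ¬ Module.Finite K V) {k m : ℕ} (hk : 3 ≤ k) (hm : 2 * m < k)
    (H : Subgroup (Module.End K V)ˣ)
    (htrans : ∀ u w : Fin k → V, LinearIndependent K u → LinearIndependent K w →
      ∃ h ∈ H, ∀ i, (h : Module.End K V) (u i) = w i)
    (N : Subgroup H) (hN : N.Normal) (c : H) (hc : c ∈ N) (v : V)
    (hv : LinearIndependent K ![v, ((c : (Module.End K V)ˣ) : Module.End K V) v]) (μ : Kˣ)
    (hfin : Module.Finite K ↥(LinearMap.range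
      (((c : (Module.End K V)ˣ) : Module.End K V) - (μ : K) • (1 : Module.End K V))))
    (hsmall : 2 * finrank K ↥(LinearMap.range
      (((c : (Module.End K V)ˣ) : Module.End K V) - (μ : K) • (1 : Module.End K V))) < k)
    (u w : Fin m → V) (hu : LinearIndependent K u) (hw : LinearIndependent K w) :
    ∃ x : H, x ∈ N ∧ ∀ i, ((x : (Module.End K V)ˣ) : Module.End K V) (u i) = w i := by
  set f := ((c : (Module.End K V)ˣ) : Module.End K V) - (μ : K) • (1 : Module.End K V) with hf
  have hcf : ∀ x, ((c : (Module.End K V)ˣ) : Module.End K V) x = f x + (μ : K) • x := by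
    intro x
    simp [hf]
  -- the subspace containing the support of `c`
  obtain ⟨W, hSW, hWfin, hWk⟩ := exists_extend_dim hinf
    (LinearMap.range f ⊔ Submodule.span K {v}) k (by
      have h1 := Submodule.finrank_add_le_finrank_add_finrank (LinearMap.range f)
        (Submodule.span K {v})
      have h2 := finrank_span_le_card (R := K) ({v} : Set V)
      simp at h2
      omega)
  have hvW : v ∈ W := hSW (Submodule.mem_sup_right (Submodule.mem_span_singleton_self v))
  have hfW : ∀ x, f x ∈ W := fun x => hSW (Submodule.mem_sup_left ⟨x, rfl⟩)
  have hcW : ∀ x ∈ W, ((c : (Module.End K V)ˣ) : Module.End K V) x ∈ W := by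
    intro x hx
    rw [hcf]
    exact W.add_mem (hfW x) (W.smul_mem _ hx)
  let c₀ : W →ₗ[K] W := ((c : (Module.End K V)ˣ) : Module.End K V).restrict hcW
  have hc₀ : ∀ x : W, (c₀ x : V) = ((c : (Module.End K V)ˣ) : Module.End K V) x := fun x => rfl
  have hc₀inj : Function.Injective c₀ := by
    intro x y hxy
    have h1 := congrArg Subtype.val hxy
    rw [hc₀, hc₀] at h1
    have h2 := congrArg (((c : (Module.End K V)ˣ)⁻¹ : (Module.End K V)ˣ) : Module.End K V) h1
    rw [inv_apply_eq, inv_apply_eq] at h2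
    exact Subtype.ext h2
  let c₁ : W ≃ₗ[K] W := LinearEquiv.ofInjectiveEndo c₀ hc₀inj
  have hc₁ : ∀ x : W, (c₁ x : V) = ((c : (Module.End K V)ˣ) : Module.End K V) x := fun x => rfl
  -- the subspace containing `u` and `w`
  have hfu : Module.Finite K (Submodule.span K (Set.range u)) :=
    FiniteDimensional.span_of_finite K (Set.finite_range u)
  have hfw : Module.Finite K (Submodule.span K (Set.range w)) :=
    FiniteDimensional.span_of_finite K (Set.finite_range w)
  obtain ⟨W', hSW', hW'fin, hW'k⟩ := exists_extend_dim hinf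
    (Submodule.span K (Set.range u) ⊔ Submodule.span K (Set.range w)) k (by
      have h1 := Submodule.finrank_add_le_finrank_add_finrank (Submodule.span K (Set.range u))
        (Submodule.span K (Set.range w))
      have h2 := finrank_range_le_card (R := K) u
      have h3 := finrank_range_le_card (R := K) w
      rw [Set.finrank, Fintype.card_fin] at h2 h3
      omega)
  have huW : ∀ i, u i ∈ W' := fun i =>
    hSW' (Submodule.mem_sup_left (Submodule.subset_span ⟨i, rfl⟩))
  have hwW : ∀ i, w i ∈ W' := fun i =>
    hSW' (Submodule.mem_sup_right (Submodule.subset_span ⟨i, rfl⟩))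
  let e : W ≃ₗ[K] W' := LinearEquiv.ofFinrankEq W W' (hWk.trans hW'k.symm)
  obtain ⟨h, hh⟩ := lift_equiv H htrans W W' hWk e
  let g : W' ≃ₗ[K] W' := e.symm.trans (c₁.trans e)
  have hconj : ∀ x : W, g (e x) = e (c₁ x) := by
    intro x
    simp [g]
  have hg : g ∈ induced N W' := by
    refine ⟨h * c * h⁻¹, hN.conj_mem c hc h, fun y => ?_⟩
    obtain ⟨x, rfl⟩ := e.surjective y
    rw [hconj, ← hh, ← hh, hc₁]
    simp only [Subgroup.coe_mul, Subgroup.coe_inv, Units.val_mul, Module.End.mul_apply,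
      inv_apply_eq]
  have hP : (induced N W').Normal := by
    constructor
    rintro p ⟨n, hn, hp⟩ q
    obtain ⟨t, ht⟩ := lift_equiv H htrans W' W' hW'k q
    refine ⟨t * n * t⁻¹, hN.conj_mem n hn t, fun y => ?_⟩
    obtain ⟨x, rfl⟩ := q.surjective y
    have h1 : (q⁻¹ : W' ≃ₗ[K] W') (q x) = x := q.symm_apply_apply x
    rw [LinearEquiv.mul_apply, LinearEquiv.mul_apply, h1, ← ht, ← ht, ← hp]
    simp only [Subgroup.coe_mul, Subgroup.coe_inv, Units.val_mul, Module.End.mul_apply,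
      inv_apply_eq]
  have hv' : LinearIndependent K ![e ⟨v, hvW⟩, g (e ⟨v, hvW⟩)] := by
    rw [hconj]
    rw [LinearIndependent.pair_iff] at hv ⊢
    intro a b hab
    apply hv
    rw [← map_smul, ← map_smul, ← map_add, e.map_eq_zero_iff] at hab
    have := congrArg Subtype.val hab
    simpa [hc₁] using this
  obtain ⟨p, ⟨n, hn, hp⟩, hpu⟩ := normal_transitive (by omega) hP hg hv' m (by omega)
    (fun i => (⟨u i, huW i⟩ : W')) (fun i => (⟨w i, hwW i⟩ : W'))
    (LinearIndependent.of_comp W'.subtype hu) (LinearIndependent.of_comp W'.subtype hw)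
  refine ⟨n, hn, fun i => ?_⟩
  have := hp ⟨u i, huW i⟩
  rw [hpu] at this
  exact this

end GLV

end SmallElt


/-- If a linearly `k`-transitive subgroup `H ≤ GL(V)` (for `V` countably infinite
dimensional over a finite field, `k ≥ 3`) contains a non-scalar element `c` of projective
rank `0 < ‖c‖ < k/2`, then the normal closure of `c` in `H` consists of elements of finite
projective rank, is locally finite, and is linearly `(⌈k/2⌉ - 1)`-transitive. -/
theorem normal_closure_of_small_element {K V : Type*} [Field K] [Fintype K]
    [AddCommGroup V] [Module K V]
    (hdim : Module.rank K V = Cardinal.aleph0)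
    {k : ℕ} (hk : 3 ≤ k) (H : Subgroup (Module.End K V)ˣ)
    (htrans : ∀ u w : Fin k → V, LinearIndependent K u → LinearIndependent K w →
      ∃ h ∈ H, ∀ i, (h : Module.End K V) (u i) = w i)
    (c : (Module.End K V)ˣ) (hc : c ∈ H)
    -- `‖c‖ > 0`: `c` is not a scalar
    (hnonscalar : ∀ μ : Kˣ, (c : Module.End K V) ≠ (μ : K) • (1 : Module.End K V))
    -- `‖c‖ < k/2`
    (hsmall : ∃ μ : Kˣ,
      Module.Finite K
        ↥(LinearMap.range ((c : Module.End K V) - (μ : K) • (1 : Module.End K V))) ∧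
      2 * Module.finrank K
        ↥(LinearMap.range ((c : Module.End K V) - (μ : K) • (1 : Module.End K V))) < k) :
    (∀ x : ↥H, x ∈ Subgroup.normalClosure ({⟨c, hc⟩} : Set ↥H) → ∃ μ : Kˣ,
      Module.Finite K
        ↥(LinearMap.range (((x : (Module.End K V)ˣ) : Module.End K V) -
          (μ : K) • (1 : Module.End K V)))) ∧
    (∀ s : Finset ↥H, (↑s : Set ↥H) ⊆ Subgroup.normalClosure ({⟨c, hc⟩} : Set ↥H) →
      Finite (Subgroup.closure (↑s : Set ↥H))) ∧
    (∀ u w : Fin ((k + 1) / 2 - 1) → V,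
      LinearIndependent K u → LinearIndependent K w →
      ∃ x : ↥H, x ∈ Subgroup.normalClosure ({⟨c, hc⟩} : Set ↥H) ∧
        ∀ i, (((x : (Module.End K V)ˣ) : Module.End K V)) (u i) = w i) := by
  have hle : Subgroup.normalClosure ({⟨c, hc⟩} : Set ↥H) ≤
      (SmallElt.glFin K V).subgroupOf H := by
    have := SmallElt.glFin_normal (K := K) (V := V)
    apply Subgroup.normalClosure_le_normal
    rw [Set.singleton_subset_iff]
    obtain ⟨μ, hμ, -⟩ := hsmall
    exact ⟨μ, hμ⟩
  refine ⟨fun x hx => hle hx, fun s hs => ?_, fun u w hu hw => ?_⟩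
  · exact SmallElt.closure_finite H s fun x hx => hle (hs hx)
  · have hinf : ¬ Module.Finite K V := by
      intro h
      have := Module.rank_lt_aleph0 K V
      rw [hdim] at this
      exact lt_irrefl _ this
    obtain ⟨μ, hμ, hμk⟩ := hsmall
    obtain ⟨v, hv⟩ : ∃ v, LinearIndependent K ![v, (c : Module.End K V) v] := by
      by_contra! hcon
      obtain ⟨a, ha⟩ := LinearMap.exists_eq_smul_id_of_forall_notLinearIndependent hcon
      by_cases ha0 : a = 0
      · have hz : ∀ x : V, x = 0 := by
          intro x
          have h1 := SmallElt.apply_inv_eq c x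
          rw [ha, ha0] at h1
          simpa using h1.symm
        apply hnonscalar 1
        apply LinearMap.ext
        intro x
        rw [hz x, map_zero, map_zero]
      · exact hnonscalar (Units.mk0 a ha0) ha
    exact SmallElt.transitive_part hinf hk (by omega) H htrans _ Subgroup.normalClosure_normal
      ⟨c, hc⟩ (Subgroup.subset_normalClosure (Set.mem_singleton _)) v hv μ hμ hμk u w hu hw
end

section
/- The group A(q)/Z, the metric completion of the inductive limit ⋃_n GL_{2ⁿ}(q) (under diagonal embeddings h ↦ diag(h,h)) with respect to the normalized projective rank metric, modulo its center Z ≅ F_qˣ, admits no mixed identity: for every non-trivial word with constants w ∈ (A(q)/Z) ∗ F_r, there exist group elements h₁,…,h_r with w(h₁,…,h_r) ≠ 1. -/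
namespace MixedId

set_option linter.unusedSectionVars false

open Module

section generic
variable {ι H : Type*} [Group H]

/-- The letter `x_i^{±1}`. -/
def act_s19 (x : ι → H) (i : ι) (e : Bool) : H := if e then x i else (x i)⁻¹

/-- Evaluation of words with constants. -/
def evalW (x : ι → H) : H → List (ι × Bool × H) → H
  | c, [] => c
  | c, y :: T => evalW x y.2.2 T * act_s19 x y.1 y.2.1 * c

/-- Reducedness, where the critical constants satisfy `P`. -/
def Red (P : H → Prop) : List (ι × Bool × H) → Prop
  | [] => True
  | y :: T => (∀ z ∈ T.head?, z.1 = y.1 → z.2.1 = !y.2.1 → P y.2.2) ∧ Red P T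

lemma act_not (x : ι → H) (i : ι) (e : Bool) : act_s19 x i (!e) = (act_s19 x i e)⁻¹ := by
  cases e <;> simp [act_s19]

lemma map_act {H' : Type*} [Group H'] (f : H →* H') (x : ι → H) (i : ι) (e : Bool) :
    f (act_s19 x i e) = act_s19 (fun i => f (x i)) i e := by
  cases e <;> simp [act_s19]

/-- map constants -/
def mapC {H' : Type*} (f : H → H') (L : List (ι × Bool × H)) : List (ι × Bool × H') :=
  L.map (fun y => (y.1, y.2.1, f y.2.2))

lemma map_evalW {H' : Type*} [Group H'] (f : H →* H') (x : ι → H) (c : H)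
    (L : List (ι × Bool × H)) :
    f (evalW x c L) = evalW (fun i => f (x i)) (f c) (mapC f L) := by
  induction L generalizing c with
  | nil => simp [evalW, mapC]
  | cons y T ih =>
    simp only [evalW, map_mul, ih, mapC, List.map_cons, map_act]

lemma mapC_mapC {H' H'' : Type*} (f : H → H') (g : H' → H'') (L : List (ι × Bool × H)) :
    mapC g (mapC f L) = mapC (fun x => g (f x)) L := by
  simp [mapC]

lemma mapC_id (L : List (ι × Bool × H)) : mapC (fun x => x) L = L := by
  simp [mapC]

lemma Red_mapC {H' : Type*} [Group H'] (f : H → H') (P : H → Prop) (Q : H' → Prop)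
    (L : List (ι × Bool × H)) (hf : ∀ y ∈ L, P y.2.2 → Q (f y.2.2)) (hL : Red P L) :
    Red Q (mapC f L) := by
  induction L with
  | nil => simp [mapC, Red]
  | cons y T ih =>
    obtain ⟨h1, h2⟩ := hL
    refine ⟨?_, ih (fun z hz => hf z (List.mem_cons_of_mem _ hz)) h2⟩
    intro z hz h3 h4
    apply hf y List.mem_cons_self
    cases T with
    | nil => simp at hz
    | cons t T =>
      simp at hz
      subst hz
      exact h1 t (by simp) h3 h4

end generic

section normalform
variable {ι G : Type*} [Group G]

lemma exists_reduced (w : Monoid.Coprod G (FreeGroup ι)) :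
    ∃ (c : G) (L : List (ι × Bool × G)), Red (fun g => g ≠ 1) L ∧
      w = evalW (fun i => Monoid.Coprod.inr (FreeGroup.of i)) (Monoid.Coprod.inl c)
        (mapC Monoid.Coprod.inl L) := by
  classical
  let X : ι → Monoid.Coprod G (FreeGroup ι) := fun i => Monoid.Coprod.inr (FreeGroup.of i)
  let P : Monoid.Coprod G (FreeGroup ι) → Prop := fun w => ∃ (c : G) (L : List (ι × Bool × G)),
    Red (fun g => g ≠ 1) L ∧ w = evalW X (Monoid.Coprod.inl c) (mapC Monoid.Coprod.inl L)
  change P w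
  have hinl : ∀ w g, P w → P (w * Monoid.Coprod.inl g) := by
    rintro w g ⟨c, L, hL, rfl⟩
    refine ⟨c * g, L, hL, ?_⟩
    cases L <;> simp [mapC, evalW, mul_assoc]
  have hlet : ∀ w i e, P w → P (w * act_s19 X i e) := by
    rintro w i e ⟨c, L, hL, rfl⟩
    by_cases hc : (∀ z ∈ L.head?, z.1 = i → z.2.1 = !e → c ≠ 1)
    · exact ⟨1, (i, e, c) :: L, ⟨hc, hL⟩, by simp [mapC, evalW]⟩
    · push Not at hc
      obtain ⟨z, hz, h1, h2, h3⟩ := hc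
      cases L with
      | nil => simp at hz
      | cons y T =>
        simp at hz
        subst hz
        refine ⟨y.2.2, T, hL.2, ?_⟩
        obtain ⟨i', e', g⟩ := y
        simp only at h1 h2
        subst h1 h2 h3
        simp [mapC, evalW, act_not]
  have hfree : ∀ (u : FreeGroup ι) w, P w → P (w * Monoid.Coprod.inr u) := by
    intro u
    induction u using FreeGroup.induction_on with
    | C1 => intro w hw; simpa using hw
    | of i => intro w hw; simpa [act_s19, X] using hlet w i true hw
    | inv_of i _ => intro w hw; simpa [act_s19, X] using hlet w i false hw
    | mul x y hx hy => intro w hw; rw [map_mul, ← mul_assoc]; exact hy _ (hx _ hw)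
  have key : ∀ w v, P v → P (v * w) := by
    intro w
    induction w using Monoid.Coprod.induction_on with
    | inl g => intro v hv; exact hinl _ _ hv
    | inr u => intro v hv; exact hfree _ _ hv
    | mul x y hx hy => intro v hv; rw [← mul_assoc]; exact hy _ (hx _ hv)
  have := key w 1 ⟨1, [], trivial, by simp [evalW, mapC]⟩
  simpa using this

end normalform

section lin
variable {K V : Type*} [Field K] [AddCommGroup V] [Module K V]

lemma exists_fix (E : Submodule K V) (u v : V) (hu : u ∉ E) (hv : v ∉ E) :
    ∃ t : V ≃ₗ[K] V, (∀ x ∈ E, t x = x) ∧ t u = v := by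
  have hf : ∃ f : V →ₗ[K] K, (∀ x ∈ E, f x = 0) ∧ f u ≠ 0 ∧ f v ≠ 0 := by
    obtain ⟨f, hf, hfE⟩ := Submodule.exists_le_ker_of_notMem hu
    obtain ⟨g, hg, hgE⟩ := Submodule.exists_le_ker_of_notMem hv
    have hfE' : ∀ x ∈ E, f x = 0 := fun x hx => hfE hx
    have hgE' : ∀ x ∈ E, g x = 0 := fun x hx => hgE hx
    by_cases h1 : f v = 0
    · by_cases h2 : g u = 0
      · exact ⟨f + g, fun x hx => by simp [hfE' x hx, hgE' x hx], by simp [h2, hf],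
          by simp [h1, hg]⟩
      · exact ⟨g, hgE', h2, hg⟩
    · exact ⟨f, hfE', hf, h1⟩
  obtain ⟨f, hE, h1, h2⟩ := hf
  let mk : V → V → (V →ₗ[K] V) := fun u v =>
    LinearMap.id + (f.smulRight ((f u)⁻¹ • (v - u)))
  have hmk : ∀ u v x, mk u v x = x + (f x * (f u)⁻¹) • (v - u) := by
    intro u v x
    simp [mk, smul_smul]
  have hinv : ∀ u v, f u ≠ 0 → f v ≠ 0 → (mk u v) ∘ₗ (mk v u) = LinearMap.id := by
    intro u v h1 h2
    ext x
    simp only [LinearMap.comp_apply, LinearMap.id_apply, hmk, map_add, map_smul, map_sub,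
      smul_eq_mul]
    have : (f x + f x * (f v)⁻¹ * (f u - f v)) * (f u)⁻¹ = f x * (f v)⁻¹ := by
      field_simp; ring
    rw [this, add_assoc, ← smul_add]
    simp
  refine ⟨LinearEquiv.ofLinearMap (mk u v) (mk v u) (hinv u v h1 h2) (hinv v u h2 h1), ?_, ?_⟩
  · intro x hx
    simp [hmk, hE x hx]
  · simp [hmk, h1]

variable {ι : Type*}

def St (h : ι → V ≃ₗ[K] V) (D : ι → Bool → Submodule K V) : Prop :=
  ∀ i e, ∀ x ∈ D i e, act_s19 h i e x ∈ D i (!e)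

def Ex (h : ι → V ≃ₗ[K] V) (D : ι → Bool → Submodule K V)
    (h' : ι → V ≃ₗ[K] V) (D' : ι → Bool → Submodule K V) : Prop :=
  ∀ i e, D i e ≤ D' i e ∧ ∀ x ∈ D i e, act_s19 h' i e x = act_s19 h i e x

lemma Ex.trans {h h' h'' : ι → V ≃ₗ[K] V} {D D' D'' : ι → Bool → Submodule K V}
    (h1 : Ex h D h' D') (h2 : Ex h' D' h'' D'') : Ex h D h'' D'' := by
  intro i e
  refine ⟨(h1 i e).1.trans (h2 i e).1, fun x hx => ?_⟩
  rw [(h2 i e).2 x ((h1 i e).1 hx), (h1 i e).2 x hx]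

lemma extend (h : ι → V ≃ₗ[K] V) (D : ι → Bool → Submodule K V) (hs : St h D)
    (i : ι) (e : Bool) (p q : V) (hp : p ∉ D i e) (hq : q ∉ D i (!e)) :
    ∃ h' D', St h' D' ∧ Ex h D h' D' ∧ act_s19 h' i e p = q ∧
      D' i e = D i e ⊔ K ∙ p ∧ D' i (!e) = D i (!e) ⊔ K ∙ q ∧
      ∀ j, j ≠ i → ∀ e', D' j e' = D j e' := by
  classical
  have hp' : act_s19 h i e p ∉ D i (!e) := by
    intro hc
    have := hs i (!e) _ hc
    rw [act_not, ← LinearEquiv.mul_apply, inv_mul_cancel, Bool.not_not] at this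
    exact hp this
  obtain ⟨t, ht, htp⟩ := exists_fix (D i (!e)) (act_s19 h i e p) q hp' hq
  let k : V ≃ₗ[K] V := t * act_s19 h i e
  let h' : ι → V ≃ₗ[K] V := Function.update h i (if e then k else k⁻¹)
  let D' : ι → Bool → Submodule K V := Function.update D i
    (fun e' => if e' = e then D i e ⊔ K ∙ p else D i (!e) ⊔ K ∙ q)
  have a1 : act_s19 h' i e = k := by cases e <;> simp [act_s19, h']
  have a2 : act_s19 h' i (!e) = k⁻¹ := by rw [act_not, a1]
  have a3 : ∀ j, j ≠ i → ∀ e', act_s19 h' j e' = act_s19 h j e' := by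
    intro j hj e'; simp [act_s19, h', hj]
  have d1 : D' i e = D i e ⊔ K ∙ p := by simp [D']
  have d2 : D' i (!e) = D i (!e) ⊔ K ∙ q := by simp [D']
  have d3 : ∀ j, j ≠ i → ∀ e', D' j e' = D j e' := by
    intro j hj e'; simp [D', hj]
  have k1 : k p = q := htp
  have k1' : k⁻¹ q = p := by rw [← k1, ← LinearEquiv.mul_apply]; simp
  have k2 : ∀ x ∈ D i e, k x = act_s19 h i e x := fun x hx => ht _ (hs i e x hx)
  have k3 : ∀ x ∈ D i (!e), k⁻¹ x = act_s19 h i (!e) x := by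
    intro x hx
    have : k (act_s19 h i (!e) x) = x := by
      rw [k2 _ (by simpa using hs i (!e) x hx), act_not, ← LinearEquiv.mul_apply]; simp
    conv_lhs => rw [← this]
    rw [← LinearEquiv.mul_apply]; simp
  have bsplit : ∀ e', e' = e ∨ e' = !e := by cases e <;> simp
  refine ⟨h', D', ?_, ?_, by rw [a1, k1], d1, d2, d3⟩
  · intro j e' x hx
    by_cases hj : j = i
    · subst hj
      rcases bsplit e' with rfl | rfl
      · rw [a1, d2]
        rw [d1] at hx
        obtain ⟨y, hy, z, hz, rfl⟩ := Submodule.mem_sup.1 hx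
        obtain ⟨a, rfl⟩ := Submodule.mem_span_singleton.1 hz
        rw [map_add, map_smul, k1, k2 y hy]
        exact Submodule.add_mem_sup (hs _ _ _ hy)
          (Submodule.smul_mem _ _ (Submodule.mem_span_singleton_self _))
      · rw [a2, Bool.not_not, d1]
        rw [d2] at hx
        obtain ⟨y, hy, z, hz, rfl⟩ := Submodule.mem_sup.1 hx
        obtain ⟨a, rfl⟩ := Submodule.mem_span_singleton.1 hz
        rw [map_add, map_smul, k1', k3 y hy]
        exact Submodule.add_mem_sup (by simpa using hs _ _ _ hy)
          (Submodule.smul_mem _ _ (Submodule.mem_span_singleton_self _))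
    · rw [a3 j hj, d3 j hj]
      rw [d3 j hj] at hx
      exact hs _ _ _ hx
  · intro j e'
    by_cases hj : j = i
    · subst hj
      rcases bsplit e' with rfl | rfl
      · rw [a1, d1]; exact ⟨le_sup_left, k2⟩
      · rw [a2, d2]; exact ⟨le_sup_left, k3⟩
    · rw [a3 j hj, d3 j hj]; exact ⟨le_rfl, fun _ _ => rfl⟩

/-- value of the word on a vector -/
def val (h : ι → V ≃ₗ[K] V) : List (ι × Bool × (V ≃ₗ[K] V)) → V → V
  | [], p => p
  | y :: T, p => val h T (y.2.2 (act_s19 h y.1 y.2.1 p))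

/-- the trajectory is inside the frozen part -/
def Tr (h : ι → V ≃ₗ[K] V) (D : ι → Bool → Submodule K V) :
    List (ι × Bool × (V ≃ₗ[K] V)) → V → Prop
  | [], _ => True
  | y :: T, p => p ∈ D y.1 y.2.1 ∧ Tr h D T (y.2.2 (act_s19 h y.1 y.2.1 p))

lemma evalW_apply (h : ι → V ≃ₗ[K] V) (c : V ≃ₗ[K] V) (L : List (ι × Bool × (V ≃ₗ[K] V)))
    (v : V) : evalW h c L v = val h L (c v) := by
  induction L generalizing c v with
  | nil => rfl
  | cons y T ih => simp only [evalW, val, LinearEquiv.mul_apply, ih]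

lemma Tr.ext {h h' : ι → V ≃ₗ[K] V} {D D' : ι → Bool → Submodule K V} (he : Ex h D h' D')
    (L : List (ι × Bool × (V ≃ₗ[K] V))) (p : V) (ht : Tr h D L p) :
    Tr h' D' L p ∧ val h' L p = val h L p := by
  induction L generalizing p with
  | nil => exact ⟨trivial, rfl⟩
  | cons y T ih =>
    obtain ⟨h1, h2⟩ := ht
    have h3 := (he y.1 y.2.1).2 p h1
    simp only [Tr, val, h3]
    exact ⟨⟨(he y.1 y.2.1).1 h1, (ih _ h2).1⟩, (ih _ h2).2⟩

/-- displacement at least `k` -/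
def Rk (k : ℕ) (g : V ≃ₗ[K] V) : Prop :=
  ∀ μ : K, k ≤ finrank K (LinearMap.range ((g : V →ₗ[K] V) - μ • LinearMap.id))

variable [Fintype K] [FiniteDimensional K V]

lemma not_cover (F : Option K → Submodule K V) (hF : ∀ o, finrank K (F o) + 2 ≤ finrank K V) :
    ∃ q, ∀ o, q ∉ F o := by
  classical
  by_contra hcon
  push Not at hcon
  have : Finite V := Module.finite_of_finite K
  have := Fintype.ofFinite V
  have h1 : Fintype.card V ≤ ∑ o : Option K, Fintype.card (F o) := by
    have : (Finset.univ : Finset V) ⊆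
        Finset.univ.biUnion (fun o : Option K => (F o : Set V).toFinset) := by
      intro x _
      simpa using hcon x
    calc Fintype.card V = (Finset.univ : Finset V).card := rfl
      _ ≤ _ := Finset.card_le_card this
      _ ≤ _ := Finset.card_biUnion_le
      _ = _ := by
        refine Finset.sum_congr rfl fun o _ => ?_
        simp
  obtain ⟨N, hN⟩ : ∃ N, finrank K V = N + 2 := ⟨finrank K V - 2, by have := hF none; omega⟩
  have hq : 2 ≤ Fintype.card K := Fintype.one_lt_card
  have h2 : ∑ o : Option K, Fintype.card (F o) ≤ (Fintype.card K + 1) * Fintype.card K ^ N := by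
    calc _ ≤ ∑ o : Option K, Fintype.card K ^ N := by
          refine Finset.sum_le_sum fun o _ => ?_
          rw [Module.card_eq_pow_finrank (K := K) (V := F o)]
          exact Nat.pow_le_pow_right (by omega) (by have := hF o; omega)
      _ = _ := by simp [Fintype.card_option]
  rw [Module.card_eq_pow_finrank (K := K) (V := V), hN, pow_add] at h1
  have h3 : 0 < Fintype.card K ^ N := by positivity
  have h4 : Fintype.card K ^ N * Fintype.card K ^ 2 ≤ Fintype.card K ^ N * (Fintype.card K + 1) := by
    refine h1.trans ?_
    rw [mul_comm (Fintype.card K ^ N)]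
    convert h2
  have h5 := Nat.le_of_mul_le_mul_left h4 h3
  nlinarith

lemma exists_pair (g : V ≃ₗ[K] V) (S : Submodule K V) (hS : finrank K S + 2 ≤ finrank K V) :
    ∃ q, q ∉ S ∧ g q ∉ S := by
  obtain ⟨q, hq⟩ := not_cover (K := K) (V := V)
    (fun o => Option.elim o S (fun _ => S.comap (g : V →ₗ[K] V))) (by
      rintro (_ | μ)
      · exact hS
      · have : finrank K (S.comap (g : V →ₗ[K] V)) = finrank K S :=
          LinearEquiv.finrank_eq (g.ofSubmodule' S)
        change finrank K (S.comap (g : V →ₗ[K] V)) + 2 ≤ finrank K V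
        omega)
  exact ⟨q, hq none, hq (some 0)⟩

lemma finrank_comap_le (f : V →ₗ[K] V) (S : Submodule K V) :
    finrank K (S.comap f) + finrank K (LinearMap.range f) ≤ finrank K S + finrank K V := by
  have h1 := LinearMap.finrank_range_add_finrank_ker (f.domRestrict (S.comap f))
  have h2 := LinearMap.finrank_range_add_finrank_ker f
  have h3 : finrank K (LinearMap.range (f.domRestrict (S.comap f))) ≤ finrank K S := by
    apply Submodule.finrank_mono
    rintro _ ⟨⟨x, hx⟩, rfl⟩
    exact hx
  have h4 : finrank K (LinearMap.ker (f.domRestrict (S.comap f))) ≤ finrank K (LinearMap.ker f) := by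
    rw [← LinearMap.finrank_range_of_inj (f := (Submodule.subtype (S.comap f)).domRestrict
      (LinearMap.ker (f.domRestrict (S.comap f))))]
    · apply Submodule.finrank_mono
      rintro _ ⟨⟨⟨x, hx⟩, hx'⟩, rfl⟩
      exact hx'
    · intro a b hab
      exact Subtype.ext (Subtype.ext hab)
  omega

lemma exists_good_pair (k : ℕ) (g : V ≃ₗ[K] V) (hg : Rk k g) (S : Submodule K V)
    (hS : finrank K S + 2 ≤ k) :
    ∃ q, q ∉ S ∧ g q ∉ S ⊔ K ∙ q := by
  have hk : k ≤ finrank K V := (hg 0).trans (Submodule.finrank_le _)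
  obtain ⟨q, hq⟩ := not_cover (K := K) (V := V)
    (fun o => Option.elim o S (fun μ => S.comap ((g : V →ₗ[K] V) - μ • LinearMap.id))) (by
      rintro (_ | μ)
      · change finrank K S + 2 ≤ finrank K V
        omega
      · have h1 := finrank_comap_le ((g : V →ₗ[K] V) - μ • LinearMap.id) S
        have h2 := hg μ
        have h3 : ∀ x y z : ℕ, x + y ≤ z + finrank K V → k ≤ y → z + 2 ≤ k →
            x + 2 ≤ finrank K V := by omega
        exact h3 _ _ _ h1 h2 hS)
  refine ⟨q, hq none, fun hc => ?_⟩
  obtain ⟨y, hy, z, hz, hyz⟩ := Submodule.mem_sup.1 hc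
  obtain ⟨a, rfl⟩ := Submodule.mem_span_singleton.1 hz
  apply hq (some a)
  simp [← hyz, hy]

lemma finrank_sup_two (S : Submodule K V) (a b : V) :
    finrank K (S ⊔ K ∙ a ⊔ K ∙ b : Submodule K V) ≤ finrank K S + 2 := by
  have h1 := Submodule.finrank_add_le_finrank_add_finrank (S ⊔ K ∙ a) (K ∙ b)
  have h2 := Submodule.finrank_add_le_finrank_add_finrank S (K ∙ a)
  have h3 : ∀ a : V, finrank K (K ∙ a) ≤ 1 := fun a => by
    simpa using finrank_span_le_card (R := K) ({a} : Set V)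
  have := h3 a
  have := h3 b
  omega

lemma traj (k : ℕ) (hk : k ≤ finrank K V) (L : List (ι × Bool × (V ≃ₗ[K] V)))
    (hL : Red (Rk k) L) (h : ι → V ≃ₗ[K] V) (D : ι → Bool → Submodule K V)
    (S S0 : Submodule K V) (p : V) (hs : St h D) (hD : ∀ i e, D i e ≤ S) (hS0 : S0 ≤ S)
    (hpS : p ∈ S) (hnil : L = [] → p ∉ S0) (hhead : ∀ y ∈ L.head?, p ∉ D y.1 y.2.1)
    (hdim : finrank K S + 2 * L.length ≤ k) :
    ∃ h' D', ∃ S' : Submodule K V, St h' D' ∧ Ex h D h' D' ∧ (∀ i e, D' i e ≤ S') ∧ S ≤ S' ∧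
      finrank K S' ≤ finrank K S + 2 * L.length ∧ Tr h' D' L p ∧ val h' L p ∈ S' ∧
      val h' L p ∉ S0 := by
  induction L generalizing h D S p with
  | nil =>
    exact ⟨h, D, S, hs, fun i e => ⟨le_rfl, fun _ _ => rfl⟩, hD, le_rfl, by simp, trivial, hpS,
      hnil rfl⟩
  | cons y T ih =>
    obtain ⟨i, e, g⟩ := y
    simp only [List.length_cons] at hdim
    have hp : p ∉ D i e := hhead (i, e, g) (by simp)
    have hchoose : ∃ q, q ∉ S ∧ g q ∉ S ∧
        ∀ z ∈ T.head?, z.1 = i → z.2.1 = !e → g q ∉ S ⊔ K ∙ q := by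
      by_cases hc : Rk k g
      · obtain ⟨q, h1, h2⟩ := exists_good_pair k g hc S (by omega)
        exact ⟨q, h1, fun hx => h2 (Submodule.mem_sup_left hx), fun _ _ _ _ => h2⟩
      · obtain ⟨q, h1, h2⟩ := exists_pair g S (by omega)
        exact ⟨q, h1, h2, fun z hz h3 h4 => absurd (hL.1 z hz h3 h4) hc⟩
    obtain ⟨q, hq, hgq, hcrit⟩ := hchoose
    obtain ⟨h1, D1, hs1, he1, hpq, d1, d2, d3⟩ :=
      extend h D hs i e p q hp (fun hx => hq (hD _ _ hx))
    have bsplit : ∀ e', e' = e ∨ e' = !e := by cases e <;> simp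
    have hSp : K ∙ p ≤ S := by simpa [Submodule.span_le] using hpS
    have hdim2 := finrank_sup_two S q (g q)
    obtain ⟨h', D', S', r1, r2, r3, r4, r5, r6, r7, r8⟩ :=
      ih hL.2 h1 D1 (S ⊔ K ∙ q ⊔ K ∙ (g q)) (g q) hs1
      (by
        intro j e'
        by_cases hj : j = i
        · subst hj
          rcases bsplit e' with rfl | rfl
          · rw [d1]
            exact (sup_le (hD _ _) hSp).trans (le_sup_left.trans le_sup_left)
          · rw [d2]
            exact (sup_le_sup_right (hD _ _) _).trans le_sup_left
        · rw [d3 j hj]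
          exact (hD _ _).trans (le_sup_left.trans le_sup_left))
      (hS0.trans (le_sup_left.trans le_sup_left))
      (Submodule.mem_sup_right (Submodule.mem_span_singleton_self _))
      (fun _ hx => hgq (hS0 hx))
      (by
        rintro ⟨j, e', g'⟩ hz
        by_cases hj : j = i
        · subst hj
          rcases bsplit e' with rfl | rfl
          · simp only [d1]
            exact fun hx => hgq (sup_le (hD _ _) hSp hx)
          · simp only [d2]
            exact fun hx => hcrit _ hz rfl rfl (sup_le_sup_right (hD _ _) _ hx)
        · simp only [d3 j hj]
          exact fun hx => hgq (hD _ _ hx))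
      (by omega)
    have hpq' : act_s19 h' i e p = q := by
      have hp1 : p ∈ D1 i e := by
        rw [d1]
        exact Submodule.mem_sup_right (Submodule.mem_span_singleton_self _)
      rw [(r2 i e).2 p hp1, hpq]
    refine ⟨h', D', S', r1, he1.trans r2, r3, le_trans (le_sup_left.trans le_sup_left) r4,
      by simp only [List.length_cons]; omega, ?_, ?_, ?_⟩
    · simp only [Tr, hpq']
      refine ⟨(r2 i e).1 ?_, r6⟩
      rw [d1]; exact Submodule.mem_sup_right (Submodule.mem_span_singleton_self _)
    · simpa only [val, hpq'] using r7
    · simpa only [val, hpq'] using r8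

lemma many (k : ℕ) (hk : k ≤ finrank K V) (L : List (ι × Bool × (V ≃ₗ[K] V)))
    (hL : Red (Rk k) L) (hne : L ≠ []) (c : V ≃ₗ[K] V) (m : ℕ)
    (hm : m * (2 * (L.length + 1)) ≤ k) :
    ∃ (h : ι → V ≃ₗ[K] V) (D : ι → Bool → Submodule K V) (S : Submodule K V)
      (E : Set V), St h D ∧ (∀ i e, D i e ≤ S) ∧
      finrank K S ≤ m * (2 * (L.length + 1)) ∧ 
      (∀ v ∈ E, v ∈ S ∧ Tr h D L (c v) ∧ val h L (c v) ∈ S) ∧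
      ∀ μ : K, m ≤ finrank K (Submodule.span K ((fun v => val h L (c v) - μ • v) '' E)) := by
  induction m with
  | zero =>
    exact ⟨fun _ => 1, fun _ _ => ⊥, ⊥, ∅, by simp [St], by simp, by simp, by simp, by simp⟩
  | succ m ih =>
    rw [add_mul, one_mul] at hm
    obtain ⟨h, D, S, E, hs, hD, hfr, hE, hrk⟩ := ih (by omega)
    obtain ⟨v, hv, hcv⟩ := exists_pair c S (by omega)
    have hdim2 := finrank_sup_two S v (c v)
    have hSle : S ≤ S ⊔ K ∙ v ⊔ K ∙ (c v) := le_sup_left.trans le_sup_left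
    obtain ⟨h', D', S', r1, r2, r3, r4, r5, r6, r7, r8⟩ :=
      traj k hk L hL h D (S ⊔ K ∙ v ⊔ K ∙ (c v)) (S ⊔ K ∙ v ⊔ K ∙ (c v)) (c v) hs
      (fun i e => (hD i e).trans hSle) le_rfl
      (Submodule.mem_sup_right (Submodule.mem_span_singleton_self _))
      (fun hx => absurd hx hne) (fun y _ hx => hcv (hD _ _ hx)) (by omega)
    have hvS : v ∈ S ⊔ K ∙ v ⊔ K ∙ (c v) :=
      Submodule.mem_sup_left (Submodule.mem_sup_right (Submodule.mem_span_singleton_self _))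
    refine ⟨h', D', S', insert v E, r1, r3, by rw [add_mul, one_mul]; omega, ?_, ?_⟩
    · rintro u (rfl | hu)
      · exact ⟨r4 hvS, r6, r7⟩
      · obtain ⟨e1, e2, e3⟩ := hE u hu
        obtain ⟨t1, t2⟩ := Tr.ext r2 L _ e2
        exact ⟨r4 (hSle e1), t1, by rw [t2]; exact r4 (hSle e3)⟩
    · intro μ
      have himg : (fun v => val h' L (c v) - μ • v) '' E =
          (fun v => val h L (c v) - μ • v) '' E := by
        apply Set.image_congr
        intro u hu
        obtain ⟨e1, e2, e3⟩ := hE u hu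
        rw [(Tr.ext r2 L _ e2).2]
      have hle : Submodule.span K ((fun v => val h L (c v) - μ • v) '' E) ≤ S := by
        rw [Submodule.span_le]
        rintro _ ⟨u, hu, rfl⟩
        obtain ⟨e1, e2, e3⟩ := hE u hu
        exact S.sub_mem e3 (S.smul_mem _ e1)
      have hlt : Submodule.span K ((fun v => val h L (c v) - μ • v) '' E) <
          Submodule.span K ((fun v => val h' L (c v) - μ • v) '' (insert v E)) := by
        refine lt_of_le_of_ne (Submodule.span_mono ?_) ?_
        · rw [← himg]; exact Set.image_mono (Set.subset_insert _ _)
        · intro heq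
          have : val h' L (c v) - μ • v ∈
              Submodule.span K ((fun v => val h' L (c v) - μ • v) '' (insert v E)) :=
            Submodule.subset_span ⟨v, Set.mem_insert _ _, rfl⟩
          rw [← heq] at this
          apply r8
          have h5 := Submodule.add_mem _ (hSle (hle this)) (Submodule.smul_mem _ μ hvS)
          simpa using h5
      have := Submodule.finrank_lt_finrank_of_lt hlt
      have := hrk μ
      omega

lemma main_lin (k : ℕ) (hk : k ≤ finrank K V) (L : List (ι × Bool × (V ≃ₗ[K] V)))
    (hL : Red (Rk k) L) (hne : L ≠ []) (c : V ≃ₗ[K] V) (m : ℕ)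
    (hm : m * (2 * (L.length + 1)) ≤ k) :
    ∃ h : ι → V ≃ₗ[K] V, Rk m (evalW h c L) := by
  obtain ⟨h, D, S, E, hs, hD, hfr, hE, hrk⟩ := many k hk L hL hne c m hm
  refine ⟨h, fun μ => (hrk μ).trans (Submodule.finrank_mono ?_)⟩
  rw [Submodule.span_le]
  rintro _ ⟨u, hu, rfl⟩
  exact ⟨u, by simp [evalW_apply]⟩

end lin

section final

lemma dist_evalW {ι G : Type*} [Group G] [MetricSpace G]
    (hbiinv : ∀ f a b : G, dist (f * a) (f * b) = dist a b ∧ dist (a * f) (b * f) = dist a b)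
    (x : ι → G) (f : G → G) (η : ℝ) (c : G) (L : List (ι × Bool × G))
    (hc : dist (f c) c ≤ η) (hL : ∀ y ∈ L, dist (f y.2.2) y.2.2 ≤ η) :
    dist (evalW x (f c) (mapC f L)) (evalW x c L) ≤ (L.length + 1) * η := by
  induction L generalizing c with
  | nil => simpa [evalW, mapC] using hc
  | cons y T ih =>
    have h1 := ih y.2.2 (hL y List.mem_cons_self) (fun z hz => hL z (List.mem_cons_of_mem _ hz))
    change dist (evalW x (f y.2.2) (mapC f T) * act_s19 x y.1 y.2.1 * f c)
      (evalW x y.2.2 T * act_s19 x y.1 y.2.1 * c) ≤ _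
    have h2 := dist_triangle (evalW x (f y.2.2) (mapC f T) * act_s19 x y.1 y.2.1 * f c)
      (evalW x (f y.2.2) (mapC f T) * act_s19 x y.1 y.2.1 * c)
      (evalW x y.2.2 T * act_s19 x y.1 y.2.1 * c)
    rw [(hbiinv _ _ _).1, (hbiinv _ _ _).2, (hbiinv _ _ _).2] at h2
    push_cast [List.length_cons]
    linarith

/-- invertible matrices as linear automorphisms -/
noncomputable def toAut (N : ℕ) (K : Type*) [Field K] :
    (Matrix (Fin N) (Fin N) K)ˣ ≃* ((Fin N → K) ≃ₗ[K] (Fin N → K)) :=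
  (Matrix.GeneralLinearGroup.toLin (n := Fin N) (R := K)).trans
    (LinearMap.GeneralLinearGroup.generalLinearEquiv K (Fin N → K))

lemma toAut_coe (N : ℕ) (K : Type*) [Field K] (a : (Matrix (Fin N) (Fin N) K)ˣ) :
    ((toAut N K a : (Fin N → K) ≃ₗ[K] (Fin N → K)) : (Fin N → K) →ₗ[K] (Fin N → K)) =
      (a : Matrix (Fin N) (Fin N) K).mulVecLin := by
  ext x
  simp [toAut, Matrix.GeneralLinearGroup.toLin, LinearMap.GeneralLinearGroup.generalLinearEquiv,
    LinearMap.GeneralLinearGroup.toLinearEquiv]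

lemma Rk_toAut (N : ℕ) (K : Type*) [Field K] (k : ℕ) (a : (Matrix (Fin N) (Fin N) K)ˣ) :
    Rk k (toAut N K a) ↔ ∀ μ : K, k ≤ ((a : Matrix (Fin N) (Fin N) K) - μ • 1).rank := by
  have : ∀ μ : K, ((a : Matrix (Fin N) (Fin N) K) - μ • 1).mulVecLin =
      ((toAut N K a : (Fin N → K) ≃ₗ[K] (Fin N → K)) : (Fin N → K) →ₗ[K] (Fin N → K)) -
        μ • LinearMap.id := by
    intro μ
    rw [toAut_coe]
    refine LinearMap.ext fun x => ?_
    simp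
  refine forall_congr' fun μ => ?_
  rw [Matrix.rank, this μ]

end final
end MixedId

/-- The group `A(q)/Z` — the completion of the inductive limit of the groups
`GL_{2ⁿ}(q)` under the diagonal embeddings `h ↦ diag(h, h)`, with respect to the
normalized projective rank metric, modulo its center — admits no mixed identity.

We characterize `A(q)/Z` abstractly: a complete group `G` with a bi-invariant metric,
together with compatible homomorphisms `φ n : GL_{2ⁿ}(q) →* G` with dense combined range,
such that `dist (φ n a) (φ n b)` is the normalized projective rank distance
`min_{μ ∈ F_qˣ} rank (a - μ·b) / 2ⁿ`. The conclusion: every non-trivial word with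
constants `w ∈ G ∗ F_r` has a non-trivial value. -/
theorem Aq_mod_center_mixed_identity_free
    {K : Type*} [Field K] [Fintype K]
    (G : Type*) [Group G] [MetricSpace G] [CompleteSpace G]
    (hbiinv : ∀ f a b : G, dist (f * a) (f * b) = dist a b ∧ dist (a * f) (b * f) = dist a b)
    (φ : ∀ n : ℕ, (Matrix (Fin (2 ^ n)) (Fin (2 ^ n)) K)ˣ →* G)
    -- compatibility with the diagonal embeddings `a ↦ diag(a, a)`:
    (hcompat : ∀ n : ℕ, ∀ a : (Matrix (Fin (2 ^ n)) (Fin (2 ^ n)) K)ˣ,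
      ∀ b : (Matrix (Fin (2 ^ (n + 1))) (Fin (2 ^ (n + 1))) K)ˣ,
      (b : Matrix (Fin (2 ^ (n + 1))) (Fin (2 ^ (n + 1))) K) =
        Matrix.reindex (finProdFinEquiv.trans (finCongr (by ring)))
          (finProdFinEquiv.trans (finCongr (by ring)))
          (Matrix.blockDiagonal fun _ : Fin 2 => (a : Matrix (Fin (2 ^ n)) (Fin (2 ^ n)) K)) →
      φ (n + 1) b = φ n a)
    -- `dist` restricts to the normalized projective rank metric on each `GL_{2ⁿ}(q)`
    -- (so that each `φ n` factors through `PGL_{2ⁿ}(q)`):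
    (hdist : ∀ n : ℕ, ∀ a b : (Matrix (Fin (2 ^ n)) (Fin (2 ^ n)) K)ˣ,
      dist (φ n a) (φ n b) =
        ((sInf {m : ℕ | ∃ μ : Kˣ,
          ((a : Matrix (Fin (2 ^ n)) (Fin (2 ^ n)) K) -
            (μ : K) • (b : Matrix (Fin (2 ^ n)) (Fin (2 ^ n)) K)).rank = m} : ℕ) : ℝ) / 2 ^ n)
    -- density of the union of the images:
    (hdense : Dense (⋃ n : ℕ, Set.range (φ n))) :
    ∀ r : ℕ, ∀ w : Monoid.Coprod G (FreeGroup (Fin r)), w ≠ 1 →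
      ∃ h : Fin r → G, Monoid.Coprod.lift (MonoidHom.id G) (FreeGroup.lift h) w ≠ 1 := by
  classical
  intro r w hw
  obtain ⟨c, L, hL, hwL⟩ := MixedId.exists_reduced w
  have heval : ∀ h : Fin r → G, Monoid.Coprod.lift (MonoidHom.id G) (FreeGroup.lift h) w =
      MixedId.evalW h c L := by
    intro h
    rw [hwL, MixedId.map_evalW, MixedId.mapC_mapC]
    simp [MixedId.mapC_id]
  by_cases hne : L = []
  · refine ⟨fun _ => 1, ?_⟩
    rw [heval]
    subst hne
    rintro h1
    apply hw
    rw [hwL]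
    have h2 : c = 1 := h1
    simp [h2, MixedId.evalW, MixedId.mapC]
  -- the ranges of the maps increase
  have hstep : ∀ n a, ∃ b, φ (n + 1) b = φ n a := by
    intro n a
    let e : Fin (2 ^ n) × Fin 2 ≃ Fin (2 ^ (n + 1)) :=
      finProdFinEquiv.trans (finCongr (by ring))
    let f : Matrix (Fin (2 ^ n)) (Fin (2 ^ n)) K →
        Matrix (Fin (2 ^ (n + 1))) (Fin (2 ^ (n + 1))) K := fun M =>
      Matrix.reindex e e (Matrix.blockDiagonal fun _ : Fin 2 => M)
    have hf : ∀ M M', M * M' = 1 → f M * f M' = 1 := by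
      intro M M' h
      simp only [f, Matrix.reindex_apply, Matrix.submatrix_mul_equiv, ← Matrix.blockDiagonal_mul, h]
      rw [show (fun _ : Fin 2 => (1 : Matrix (Fin (2 ^ n)) (Fin (2 ^ n)) K)) = 1 from rfl,
        Matrix.blockDiagonal_one, Matrix.submatrix_one_equiv]
    exact ⟨⟨f a, f (a⁻¹ : _ˣ), hf _ _ (by simp), hf _ _ (by simp)⟩, hcompat n a _ rfl⟩
  have hmono : ∀ n n', n ≤ n' → ∀ a, ∃ b, φ n' b = φ n a := by
    intro n n' hn
    induction n', hn using Nat.le_induction with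
    | base => exact fun a => ⟨a, rfl⟩
    | succ n' hn ih =>
      intro a
      obtain ⟨b, hb⟩ := ih a
      obtain ⟨b', hb'⟩ := hstep n' b
      exact ⟨b', hb'.trans hb⟩
  have happrox : ∀ (F : Finset G) (η : ℝ), 0 < η → ∀ n0 : ℕ, ∃ n ≥ n0, ∀ g ∈ F,
      ∃ a, dist (φ n a) g < η := by
    intro F η hη n0
    have h1 : ∀ g : G, ∃ n, ∃ a, dist (φ n a) g < η := by
      intro g
      obtain ⟨y, hy, hgy⟩ := Metric.dense_iff.1 hdense g η hη
      obtain ⟨n, a, rfl⟩ := Set.mem_iUnion.1 hgy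
      exact ⟨n, a, hy⟩
    choose N hN using h1
    refine ⟨max n0 (F.sup N), le_max_left _ _, fun g hg => ?_⟩
    obtain ⟨a, ha⟩ := hN g
    obtain ⟨b, hb⟩ := hmono (N g) (max n0 (F.sup N))
      ((Finset.le_sup hg).trans (le_max_right _ _)) a
    exact ⟨b, by rw [hb]; exact ha⟩
  -- uniform lower bound for the critical constants
  have hδ : ∀ L : List (Fin r × Bool × G), ∃ δ : ℝ, 0 < δ ∧ δ ≤ 1 ∧
      ∀ y ∈ L, y.2.2 ≠ 1 → δ ≤ dist y.2.2 1 := by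
    intro L
    induction L with
    | nil => exact ⟨1, one_pos, le_rfl, by simp⟩
    | cons y T ih =>
      obtain ⟨δ, h1, h2, h3⟩ := ih
      by_cases hy : y.2.2 = 1
      · refine ⟨δ, h1, h2, fun z hz hz1 => ?_⟩
        rcases List.mem_cons.1 hz with rfl | hz
        · exact absurd hy hz1
        · exact h3 z hz hz1
      · refine ⟨min δ (dist y.2.2 1), lt_min h1 (dist_pos.2 hy), (min_le_left _ _).trans h2,
          fun z hz hz1 => ?_⟩
        rcases List.mem_cons.1 hz with rfl | hz
        · exact min_le_right _ _
        · exact (min_le_left _ _).trans (h3 z hz hz1)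
  obtain ⟨δ, hδ0, hδ1, hδL⟩ := hδ L
  set C : ℕ := 2 * (L.length + 1) with hC
  have hC2 : (2 : ℝ) ≤ C := by
    have : 2 ≤ C := by omega
    exact_mod_cast this
  obtain ⟨n0, hn0⟩ : ∃ n0 : ℕ, (C : ℝ) / (δ / 2) < 2 ^ n0 := pow_unbounded_of_one_lt _ one_lt_two
  have hn0' : (C : ℝ) ≤ δ / 2 * 2 ^ n0 := by
    rw [div_lt_iff₀ (by positivity)] at hn0
    linarith
  have hp0 : (0 : ℝ) < 2 ^ n0 := by positivity
  set η : ℝ := (2 ^ n0)⁻¹ / C with hη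
  have hη0 : 0 < η := by positivity
  have hηδ : η ≤ δ / 2 := by
    rw [hη, div_le_iff₀ (by positivity), inv_le_iff_one_le_mul₀ hp0]
    nlinarith
  have hηC : (L.length + 1) * η < (2 ^ n0)⁻¹ := by
    have h1 : ((L.length : ℝ) + 1) = C / 2 := by rw [hC]; push_cast; ring
    have h2 : (0 : ℝ) < (2 ^ n0)⁻¹ := by positivity
    rw [h1, hη]
    have : (C : ℝ) / 2 * ((2 ^ n0)⁻¹ / C) = (2 ^ n0)⁻¹ / 2 := by field_simp
    rw [this]
    linarith
  obtain ⟨n, hn, hA⟩ := happrox (insert c (L.map (fun y => y.2.2)).toFinset) η hη0 n0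
  have hA' : ∀ g : G, ∃ a, g ∈ insert c (L.map (fun y => y.2.2)).toFinset →
      dist (φ n a) g < η := by
    intro g
    by_cases hg : g ∈ insert c (L.map (fun y => y.2.2)).toFinset
    · obtain ⟨a, ha⟩ := hA g hg
      exact ⟨a, fun _ => ha⟩
    · exact ⟨1, fun h => absurd h hg⟩
  choose A hAd using hA'
  have hAc : dist (φ n (A c)) c < η := hAd c (Finset.mem_insert_self _ _)
  have hAL : ∀ y ∈ L, dist (φ n (A y.2.2)) y.2.2 < η := fun y hy =>
    hAd _ (Finset.mem_insert_of_mem (List.mem_toFinset.2 (List.mem_map_of_mem hy)))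
  obtain ⟨d, rfl⟩ := Nat.exists_eq_add_of_le hn
  have hpn : (2 : ℝ) ^ (n0 + d) = 2 ^ n0 * 2 ^ d := pow_add _ _ _
  have hpd : (0 : ℝ) < 2 ^ d := by positivity
  have hkN : 2 ^ d * C ≤ 2 ^ (n0 + d) := by
    have : (2 : ℝ) ^ d * C ≤ 2 ^ (n0 + d) := by
      rw [hpn, mul_comm]
      gcongr
      nlinarith
    exact_mod_cast this
  have hcrit : ∀ y ∈ L, y.2.2 ≠ 1 →
      MixedId.Rk (2 ^ d * C) (MixedId.toAut (2 ^ (n0 + d)) K (A y.2.2)) := by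
    intro y hy hy1
    rw [MixedId.Rk_toAut]
    intro μ
    by_cases hμ : μ = 0
    · subst hμ
      have hr := Matrix.rank_of_isUnit (A y.2.2 : Matrix (Fin (2 ^ (n0 + d))) (Fin (2 ^ (n0 + d))) K)
        (Units.isUnit _)
      simp only [zero_smul, sub_zero, hr, Fintype.card_fin]
      exact hkN
    · have h1 := hdist (n0 + d) (A y.2.2) 1
      have h2 : δ / 2 ≤ dist (φ (n0 + d) (A y.2.2)) (φ (n0 + d) 1) := by
        have h3 := dist_triangle y.2.2 (φ (n0 + d) (A y.2.2)) 1
        have h4 := hAL y hy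
        have h5 := hδL y hy hy1
        rw [dist_comm] at h4
        rw [map_one]
        linarith
      rw [h1, le_div_iff₀ (by positivity)] at h2
      have h6 : sInf {m : ℕ | ∃ μ : Kˣ,
          ((A y.2.2 : Matrix (Fin (2 ^ (n0 + d))) (Fin (2 ^ (n0 + d))) K) -
            (μ : K) • ((1 : (Matrix (Fin (2 ^ (n0 + d))) (Fin (2 ^ (n0 + d))) K)ˣ) :
              Matrix (Fin (2 ^ (n0 + d))) (Fin (2 ^ (n0 + d))) K)).rank = m} ≤
          ((A y.2.2 : Matrix (Fin (2 ^ (n0 + d))) (Fin (2 ^ (n0 + d))) K) - μ • 1).rank :=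
        Nat.sInf_le ⟨Units.mk0 μ hμ, by simp⟩
      refine le_trans ?_ h6
      have h7 : (2 : ℝ) ^ d * C ≤ δ / 2 * 2 ^ (n0 + d) := by
        rw [hpn]
        nlinarith
      have h8 := h7.trans h2
      exact_mod_cast h8
  have hred := MixedId.Red_mapC (fun g => MixedId.toAut (2 ^ (n0 + d)) K (A g)) (fun g => g ≠ 1)
    (MixedId.Rk (2 ^ d * C)) L hcrit hL
  obtain ⟨h, hh⟩ := MixedId.main_lin (2 ^ d * C) (by simpa using hkN) _ hred
    (by simpa [MixedId.mapC] using hne) (MixedId.toAut (2 ^ (n0 + d)) K (A c)) (2 ^ d)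
    (by simp [MixedId.mapC, hC])
  let x : Fin r → (Matrix (Fin (2 ^ (n0 + d))) (Fin (2 ^ (n0 + d))) K)ˣ := fun i =>
    (MixedId.toAut (2 ^ (n0 + d)) K).symm (h i)
  have hx : MixedId.toAut (2 ^ (n0 + d)) K (MixedId.evalW x (A c) (MixedId.mapC A L)) =
      MixedId.evalW h (MixedId.toAut (2 ^ (n0 + d)) K (A c))
        (MixedId.mapC (fun g => MixedId.toAut (2 ^ (n0 + d)) K (A g)) L) := by
    have := MixedId.map_evalW (MixedId.toAut (2 ^ (n0 + d)) K).toMonoidHom x (A c)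
      (MixedId.mapC A L)
    rw [MixedId.mapC_mapC] at this
    simpa [x] using this
  rw [← hx, MixedId.Rk_toAut] at hh
  refine ⟨fun i => φ (n0 + d) (x i), ?_⟩
  rw [heval]
  intro hone
  have e1 := MixedId.dist_evalW hbiinv (fun i => φ (n0 + d) (x i)) (fun g => φ (n0 + d) (A g)) η c L
    hAc.le (fun y hy => (hAL y hy).le)
  rw [hone] at e1
  have e2 := MixedId.map_evalW (φ (n0 + d)) x (A c) (MixedId.mapC A L)
  rw [MixedId.mapC_mapC] at e2
  rw [← e2, ← map_one (φ (n0 + d)), hdist] at e1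
  have e3 := e1.trans_lt hηC
  rw [div_lt_iff₀ (by positivity), hpn, inv_mul_cancel_left₀ hp0.ne'] at e3
  have e4 := Nat.sInf_mem (s := {m : ℕ | ∃ μ : Kˣ,
      (((MixedId.evalW x (A c) (MixedId.mapC A L) :
          (Matrix (Fin (2 ^ (n0 + d))) (Fin (2 ^ (n0 + d))) K)ˣ) :
        Matrix (Fin (2 ^ (n0 + d))) (Fin (2 ^ (n0 + d))) K) -
          (μ : K) • ((1 : (Matrix (Fin (2 ^ (n0 + d))) (Fin (2 ^ (n0 + d))) K)ˣ) :
            Matrix (Fin (2 ^ (n0 + d))) (Fin (2 ^ (n0 + d))) K)).rank = m}) ⟨_, 1, rfl⟩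
  obtain ⟨μ, hμ⟩ := e4
  rw [← hμ] at e3
  have e5 := hh (μ : K)
  rw [Units.val_one] at e3
  refine absurd e3 (not_lt.2 ?_)
  exact_mod_cast e5
end
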